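/- Let n ≥ 2, M ≥ 1, s ∈ (0,1), p ∈ (1,∞), r > 0 and δ ∈ (0, 1/4). Let u, v : ℝⁿ → ℝ^M be measurable maps whose restrictions to the sphere ∂B(0,r) are continuous, and assume the quantities A := ∫_{∂B(0,r)} ∫_{B(0,2r)∖B(0,r)} |u(θ)−u(y)|^p/|θ−y|^{n+sp} dy dσ(θ), B := ∫_{∂B(0,r)} ∫_{B(0,r)} |v(θ)−v(y)|^p/|θ−y|^{n+sp} dy dσ(θ), and D := ∫_{∂B(0,r)} ∫_{∂B(0,r)} |u(θ)−u(ω)|^p/|θ−ω|^{n−1+sp} dσ(θ) dσ(ω) are finite, where σ is the (n−1)-dimensional Hausdorff measure on ∂B(0,r). Let η : [0,∞) → [0,1] be smooth with η ≡ 1 on [0,(1−3δ/4)r], η ≡ 0 on [(1−δ/2)r, ∞) and |η'| ≤ 100/(δr). Define w : ℝⁿ → ℝ^M by w(x) := u(x) for |x| ≥ r; w(x) := (1−η(|x|)) u(r x/|x|) + η(|x|) v(r x/|x|) for (1−δ)r < |x| < r; and w(x) := v(x/(1−δ)) for |x| ≤ (1−δ)r. Then: (i) for every R ≥ r, sup_{x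 ∈ B(0,R)} dist(w(x), u(B(0,R)) ∪ v(B(0,R))) ≤ sup_{θ ∈ ∂B(0,r)} |u(θ)−v(θ)|; and (ii) there is a constant C = C(n,s,p) such that, with σ₀ := max{p−1, sp}, [w]_{W^{s,p}(B(0,2r))}^p ≤ [u]_{W^{s,p}(B(0,2r)∖B(0,r))}^p + C ( [v]_{W^{s,p}(B(0,r))}^p + δ^{−sp} r (A+B) + δ r D + δ^{−σ₀} r^{n−sp} (sup_{θ∈∂B(0,r)} |u(θ)−v(θ)|)^p ). -/

import Mathlib

open MeasureTheory Classical
open scoped ENNReal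

noncomputable section

/-- Euclidean space `ℝᵏ`. -/
abbrev Euc (k : ℕ) : Type _ := EuclideanSpace ℝ (Fin k)

/-- The (unrooted) Gagliardo energy `∫_A∫_A |f(x)-f(y)|^p / |x-y|^{n+sp} dx dy ∈ [0,∞]`,
so that `[f]_{W^{s,p}(A)}^p = gagEnergy n M s p A f`. -/
def gagEnergy (n M : ℕ) (s p : ℝ) (A : Set (Euc n)) (f : Euc n → Euc M) : ℝ≥0∞ :=
  ∫⁻ x in A, ∫⁻ y in A, ENNReal.ofReal (‖f x - f y‖ ^ p / ‖x - y‖ ^ ((n : ℝ) + s * p))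

/-- The Luckhaus-type gluing of `u` (outside `B(0,r)`) and `v` (inside `B(0,(1-δ)r)`,
suitably rescaled), interpolated on the annulus via the cutoff `η`. -/
def glue (n M : ℕ) (r δ : ℝ) (η : ℝ → ℝ) (u v : Euc n → Euc M) (x : Euc n) : Euc M :=
  if r ≤ ‖x‖ then u x
  else if ‖x‖ ≤ (1 - δ) * r then v ((1 - δ)⁻¹ • x)
  else (1 - η ‖x‖) • u ((r / ‖x‖) • x) + η ‖x‖ • v ((r / ‖x‖) • x)

open Set Metric
open scoped NNReal

/-- The surface measure of the unit sphere, seen as a measure on the whole space. -/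
def nu (n : ℕ) : Measure (Euc n) :=
  ((volume : Measure (Euc n)).toSphere).map (Subtype.val : sphere (0 : Euc n) 1 → Euc n)

instance nu_finite (n : ℕ) : IsFiniteMeasure (nu n) := by
  unfold nu; infer_instance

lemma nu_ae_norm (n : ℕ) : ∀ᵐ θ ∂(nu n), ‖θ‖ = 1 := by
  unfold nu
  rw [ae_map_iff (by fun_prop) (measurableSet_eq_fun (by fun_prop) (by fun_prop))]
  filter_upwards with θ
  simp

lemma lint_nu (n : ℕ) (f : Euc n → ℝ≥0∞) (hf : Measurable f) :
    ∫⁻ θ, f θ ∂(nu n) = ∫⁻ θ : sphere (0 : Euc n) 1, f θ ∂(volume : Measure (Euc n)).toSphere := by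
  unfold nu
  rw [lintegral_map hf measurable_subtype_coe]

lemma polar {n : ℕ} (hn : 2 ≤ n) (f : Euc n → ℝ≥0∞) (hf : Measurable f) :
    ∫⁻ x, f x = ∫⁻ θ, (∫⁻ ρ in Ioi (0 : ℝ), ENNReal.ofReal (ρ ^ (n - 1)) * f (ρ • θ)) ∂(nu n) := by
  have : Nontrivial (Euc n) := by
    have : Nonempty (Fin n) := ⟨⟨0, by omega⟩⟩
    infer_instance
  have hdim : Module.finrank ℝ (Euc n) = n := by simp
  rw [lint_nu]
  swap
  · apply Measurable.lintegral_prod_right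
    fun_prop
  calc ∫⁻ x, f x = ∫⁻ x in ({0}ᶜ : Set (Euc n)), f x := by rw [restrict_compl_singleton]
    _ = ∫⁻ x : ({0}ᶜ : Set (Euc n)), f x ∂(Measure.comap Subtype.val volume) := by
        rw [lintegral_subtype_comap (measurableSet_singleton _).compl]
    _ = ∫⁻ x : ({0}ᶜ : Set (Euc n)), (fun z : sphere (0 : Euc n) 1 × Ioi (0 : ℝ) => f (z.2.1 • z.1.1))
          (homeomorphUnitSphereProd (Euc n) x) ∂(Measure.comap Subtype.val volume) := by
        apply lintegral_congr
        intro x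
        have hx : ‖(x : Euc n)‖ ≠ 0 := norm_ne_zero_iff.2 x.2
        simp [smul_smul, hx]
    _ = ∫⁻ z, f (z.2.1 • z.1.1)
          ∂((volume : Measure (Euc n)).toSphere.prod (Measure.volumeIoiPow (n - 1))) := by
        have := (volume : Measure (Euc n)).measurePreserving_homeomorphUnitSphereProd
        rw [hdim] at this
        exact this.lintegral_comp (f := fun z : sphere (0 : Euc n) 1 × Ioi (0 : ℝ) => f (z.2.1 • z.1.1))
          (by fun_prop)
    _ = ∫⁻ θ : sphere (0 : Euc n) 1, ∫⁻ ρ : Ioi (0 : ℝ), f (ρ.1 • θ.1) ∂(Measure.volumeIoiPow (n - 1))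
          ∂(volume : Measure (Euc n)).toSphere := by
        rw [lintegral_prod _ (by fun_prop)]
    _ = _ := by
        apply lintegral_congr
        intro θ
        unfold Measure.volumeIoiPow
        rw [lintegral_withDensity_eq_lintegral_mul _ (by fun_prop) (by fun_prop)]
        simp only [Pi.mul_apply]
        rw [lintegral_subtype_comap measurableSet_Ioi
          (fun ρ => ENNReal.ofReal (ρ ^ (n - 1)) * f (ρ • (θ : Euc n)))]

lemma lint_smul_set {E : Type*} [NormedAddCommGroup E] [NormedSpace ℝ E] [FiniteDimensional ℝ E]
    [MeasurableSpace E] [BorelSpace E] (μ : Measure E) [μ.IsAddHaarMeasure] {c : ℝ} (hc : 0 < c)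
    (A : Set E) (f : E → ℝ≥0∞) :
    ∫⁻ x in A, f x ∂μ = ENNReal.ofReal (c ^ (Module.finrank ℝ E)) *
      ∫⁻ x in (fun x => c • x) ⁻¹' A, f (c • x) ∂μ := by
  have hemb : MeasurableEmbedding (fun x : E => c • x) :=
    (Homeomorph.smulOfNeZero c hc.ne').measurableEmbedding
  rw [← hemb.lintegral_map, ← hemb.restrict_map, Measure.map_addHaar_smul μ hc.ne',
    Measure.restrict_smul, lintegral_smul_measure, smul_eq_mul, ← mul_assoc,
    ← ENNReal.ofReal_mul (by positivity), abs_of_pos (by positivity), mul_inv_cancel₀ (by positivity)]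
  simp

lemma lint_smul {E : Type*} [NormedAddCommGroup E] [NormedSpace ℝ E] [FiniteDimensional ℝ E]
    [MeasurableSpace E] [BorelSpace E] (μ : Measure E) [μ.IsAddHaarMeasure] {c : ℝ} (hc : 0 < c)
    (f : E → ℝ≥0∞) :
    ∫⁻ x, f x ∂μ = ENNReal.ofReal (c ^ (Module.finrank ℝ E)) * ∫⁻ x, f (c • x) ∂μ := by
  simpa using lint_smul_set μ hc univ f

/-- scaling of the Japanese bracket integral -/
lemma bracket {E : Type*} [NormedAddCommGroup E] [NormedSpace ℝ E] [FiniteDimensional ℝ E]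
    [MeasurableSpace E] [BorelSpace E] (μ : Measure E) [μ.IsAddHaarMeasure] {m : ℕ}
    (hm : Module.finrank ℝ E = m) {q : ℝ} (hq : (m : ℝ) < q) :
    ∃ C : ℝ≥0, ∀ (a : ℝ), 0 < a → ∀ c : E,
      ∫⁻ x, ENNReal.ofReal ((a + ‖x - c‖) ^ (-q)) ∂μ ≤ C * ENNReal.ofReal (a ^ ((m : ℝ) - q)) := by
  have hfin := finite_integral_one_add_norm (μ := μ) (r := q) (by rw [hm]; exact hq)
  refine ⟨(∫⁻ x : E, ENNReal.ofReal ((1 + ‖x‖) ^ (-q)) ∂μ).toNNReal, fun a ha c => ?_⟩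
  rw [ENNReal.coe_toNNReal hfin.ne]
  rw [lintegral_sub_right_eq_self (fun x => ENNReal.ofReal ((a + ‖x‖) ^ (-q))) c, lint_smul μ ha, hm]
  have : ∀ x : E, ENNReal.ofReal ((a + ‖a • x‖) ^ (-q)) =
      ENNReal.ofReal (a ^ (-q)) * ENNReal.ofReal ((1 + ‖x‖) ^ (-q)) := by
    intro x
    rw [norm_smul, Real.norm_of_nonneg ha.le, ← ENNReal.ofReal_mul (by positivity),
      ← Real.mul_rpow ha.le (by positivity)]
    ring_nf
  simp_rw [this]
  rw [lintegral_const_mul _ (by fun_prop), ← mul_assoc, ← ENNReal.ofReal_mul (by positivity),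
    mul_comm, ← Real.rpow_natCast, ← Real.rpow_add ha, sub_eq_add_neg]

lemma thick {n : ℕ} (hn : 2 ≤ n) (F G : Euc n → ℝ≥0∞) (t : Euc n → ℝ) (hF : Measurable F)
    (h : ∀ θ, ‖θ‖ = 1 → ∀ ρ, 1 < ρ → ρ < 1 + t θ → G θ ≤ F (ρ • θ)) :
    ∫⁻ θ, G θ * ENNReal.ofReal (t θ) ∂(nu n) ≤ ∫⁻ x, F x := by
  rw [polar hn F hF]
  apply lintegral_mono_ae
  filter_upwards [nu_ae_norm n] with θ hθ
  calc G θ * ENNReal.ofReal (t θ) = ∫⁻ ρ in Ioo 1 (1 + t θ), G θ := by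
        rw [setLIntegral_const, Real.volume_Ioo]; congr 2; ring
    _ ≤ ∫⁻ ρ in Ioo 1 (1 + t θ), ENNReal.ofReal (ρ ^ (n - 1)) * F (ρ • θ) := by
        apply setLIntegral_mono' measurableSet_Ioo
        intro ρ hρ
        calc G θ = 1 * G θ := by simp
          _ ≤ _ := by
            gcongr
            · rw [ENNReal.one_le_ofReal]; exact one_le_pow₀ hρ.1.le
            · exact h θ hθ ρ hρ.1 hρ.2
    _ ≤ _ := by
        apply lintegral_mono_set
        intro ρ hρ
        exact lt_trans one_pos hρ.1

lemma thin {n : ℕ} (hn : 2 ≤ n) (F G : Euc n → ℝ≥0∞) (a b : ℝ) (hF : Measurable F)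
    (hG : Measurable G)
    (h : ∀ θ, ‖θ‖ = 1 → ∀ ρ, 0 < ρ →
      ENNReal.ofReal (ρ ^ (n - 1)) * F (ρ • θ) ≤ (Icc a b).indicator (fun _ => G θ) ρ) :
    ∫⁻ x, F x ≤ ENNReal.ofReal (b - a) * ∫⁻ θ, G θ ∂(nu n) := by
  rw [polar hn F hF, ← lintegral_const_mul _ hG]
  apply lintegral_mono_ae
  filter_upwards [nu_ae_norm n] with θ hθ
  calc _ ≤ ∫⁻ ρ in Ioi (0:ℝ), (Icc a b).indicator (fun _ => G θ) ρ :=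
        setLIntegral_mono' measurableSet_Ioi (fun ρ hρ => h θ hθ ρ hρ)
    _ ≤ ∫⁻ ρ, (Icc a b).indicator (fun _ => G θ) ρ := setLIntegral_le_lintegral _ _
    _ = _ := by
        rw [lintegral_indicator measurableSet_Icc, setLIntegral_const, Real.volume_Icc, mul_comm]

/-- The half-open annulus. -/
def annS (n : ℕ) (δ : ℝ) : Set (Euc n) := (fun x : Euc n => ‖x‖) ⁻¹' (Ico (1 - δ) 1)

lemma mem_annS {n : ℕ} {δ : ℝ} {x : Euc n} : x ∈ annS n δ ↔ 1 - δ ≤ ‖x‖ ∧ ‖x‖ < 1 := Iff.rfl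

lemma meas_annS (n : ℕ) (δ : ℝ) : MeasurableSet (annS n δ) :=
  measurable_norm measurableSet_Ico

lemma polarN {n : ℕ} (hn : 2 ≤ n) (δ : ℝ) (h : Euc n → ℝ≥0∞) (hh : Measurable h) :
    ∫⁻ x in annS n δ, h x ≤
      ∫⁻ θ, (∫⁻ ρ in Ico (1 - δ) 1, h (ρ • θ)) ∂(nu n) := by
  have hN := meas_annS n δ
  rw [← lintegral_indicator hN, polar hn _ (hh.indicator hN)]
  apply lintegral_mono_ae
  filter_upwards [nu_ae_norm n] with θ hθ
  rw [← lintegral_indicator measurableSet_Ico]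
  refine le_trans (setLIntegral_mono' measurableSet_Ioi
    (g := fun ρ => (Ico (1 - δ) 1).indicator (fun ρ => h (ρ • θ)) ρ) (fun ρ hρ => ?_))
    (setLIntegral_le_lintegral _ _)
  have hρ0 : (0:ℝ) < ρ := hρ
  have hnorm : ‖ρ • θ‖ = ρ := by rw [norm_smul, hθ, Real.norm_of_nonneg hρ0.le, mul_one]
  by_cases hm : ρ ∈ Ico (1 - δ) 1
  · rw [indicator_of_mem hm, indicator_of_mem (show ρ • θ ∈ _ from by
      rw [mem_annS, hnorm]; exact hm)]
    calc _ ≤ 1 * h (ρ • θ) := by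
          gcongr
          rw [ENNReal.ofReal_le_one]
          exact pow_le_one₀ hρ0.le hm.2.le
      _ = _ := one_mul _
  · rw [indicator_of_notMem hm, indicator_of_notMem]
    · simp
    · rw [mem_annS, hnorm]; exact hm

lemma vol_cball {n : ℕ} (x : Euc n) {r : ℝ} (hr : 0 < r) :
    volume (closedBall x r) = ENNReal.ofReal (r ^ n) * volume (ball (0 : Euc n) 1) := by
  rw [Measure.addHaar_closedBall _ _ hr.le]; simp

lemma vol_ball {n : ℕ} (x : Euc n) {r : ℝ} (hr : 0 < r) :
    volume (ball x r) = ENNReal.ofReal (r ^ n) * volume (ball (0 : Euc n) 1) := by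
  rw [Measure.addHaar_ball_of_pos _ _ hr]; simp

lemma nsmul_dist {n : ℕ} {θ : Euc n} (hθ : ‖θ‖ = 1) (ρ : ℝ) : ‖ρ • θ - θ‖ = |ρ - 1| := by
  have : ρ • θ - θ = (ρ - 1) • θ := by rw [sub_smul, one_smul]
  rw [this, norm_smul, hθ, mul_one, Real.norm_eq_abs]

lemma cap_upper {n : ℕ} (hn : 2 ≤ n) : ∃ C : ℝ≥0, ∀ (θ₀ : Euc n) (d : ℝ), 0 < d →
    nu n {θ | ‖θ - θ₀‖ ≤ d} ≤ C * ENNReal.ofReal (d ^ (n - 1)) := by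
  have hfin : volume (ball (0 : Euc n) 1) ≠ ⊤ := measure_ball_lt_top.ne
  refine ⟨(2 ^ n) * (volume (ball (0 : Euc n) 1)).toNNReal, fun θ₀ d hd => ?_⟩
  have hm : MeasurableSet {θ : Euc n | ‖θ - θ₀‖ ≤ d} :=
    measurableSet_le (by fun_prop) (by fun_prop)
  have key := thick hn ((closedBall θ₀ (2 * d)).indicator 1) ({θ | ‖θ - θ₀‖ ≤ d}.indicator 1)
    (fun _ => d) (measurable_one.indicator measurableSet_closedBall) (by
      intro θ hθ ρ h1 h2
      by_cases hc : ‖θ - θ₀‖ ≤ d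
      · rw [indicator_of_mem (show θ ∈ {θ | ‖θ - θ₀‖ ≤ d} from hc), indicator_of_mem]; simp
        rw [mem_closedBall, dist_eq_norm]
        calc ‖ρ • θ - θ₀‖ = ‖(ρ • θ - θ) + (θ - θ₀)‖ := by congr 1; abel
          _ ≤ |ρ - 1| + d := by
            grw [norm_add_le, nsmul_dist hθ, hc]
          _ ≤ 2 * d := by rw [abs_of_pos (by linarith)]; linarith
      · rw [indicator_of_notMem (show θ ∉ {θ | ‖θ - θ₀‖ ≤ d} from hc)]; simp)
  rw [lintegral_mul_const _ (measurable_one.indicator hm), lintegral_indicator_one hm,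
    lintegral_indicator_one measurableSet_closedBall, vol_cball _ (by positivity)] at key
  have hd0 : ENNReal.ofReal d ≠ 0 := by simpa using hd
  rw [← ENNReal.mul_le_mul_iff_left hd0 ENNReal.ofReal_ne_top]
  refine key.trans (le_of_eq ?_)
  push_cast
  rw [ENNReal.coe_toNNReal hfin, mul_assoc _ (ENNReal.ofReal _) (ENNReal.ofReal _),
    ← ENNReal.ofReal_mul (by positivity), ← pow_succ, Nat.sub_add_cancel (by omega), mul_pow,
    ENNReal.ofReal_mul (by positivity), ENNReal.ofReal_pow (by norm_num)]
  simp only [ENNReal.ofReal_ofNat]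
  ring

lemma cap_lower {n : ℕ} (hn : 2 ≤ n) : ∃ C : ℝ≥0, ∀ (y : Euc n), ‖y‖ < 1 →
    ENNReal.ofReal ((1 - ‖y‖) ^ (n - 1)) ≤ C * nu n {θ | ‖θ - y‖ ≤ 2 * (1 - ‖y‖)} := by
  have hfin : volume (ball (0 : Euc n) 1) ≠ ⊤ := measure_ball_lt_top.ne
  have hpos : volume (ball (0 : Euc n) 1) ≠ 0 := (measure_ball_pos _ _ one_pos).ne'
  set V := volume (ball (0 : Euc n) 1) with hV
  have hC : (2 ^ n) * (ENNReal.ofReal ((3/2) ^ (n-1)) * V⁻¹) ≠ ⊤ := by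
    apply ENNReal.mul_ne_top (by simp)
    exact ENNReal.mul_ne_top ENNReal.ofReal_ne_top (by simpa using hpos)
  refine ⟨((2 ^ n) * (ENNReal.ofReal ((3/2) ^ (n-1)) * V⁻¹)).toNNReal, fun y hy => ?_⟩
  rw [ENNReal.coe_toNNReal hC]
  obtain ⟨e, he, hey⟩ : ∃ e : Euc n, ‖e‖ = 1 ∧ ‖e - y‖ = 1 - ‖y‖ := by
    by_cases h0 : y = 0
    · refine ⟨EuclideanSpace.single ⟨0, by omega⟩ 1, by simp, by simp [h0]⟩
    · have hy0 : ‖y‖ ≠ 0 := norm_ne_zero_iff.2 h0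
      refine ⟨‖y‖⁻¹ • y, by simp [norm_smul, hy0], ?_⟩
      have : ‖y‖⁻¹ • y - y = (‖y‖⁻¹ - 1) • y := by rw [sub_smul, one_smul]
      rw [this, norm_smul, Real.norm_of_nonneg, sub_mul, inv_mul_cancel₀ hy0, one_mul]
      rw [sub_nonneg]
      exact (one_le_inv₀ (by positivity)).2 hy.le
  set b := 1 - ‖y‖ with hb
  have hb0 : 0 < b := by linarith
  have hb1 : b ≤ 1 := by have := norm_nonneg y; linarith
  have hm : MeasurableSet {θ : Euc n | ‖θ - y‖ ≤ 2 * b} :=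
    measurableSet_le (by fun_prop) (by fun_prop)
  have key := thin hn ((ball e (b/2)).indicator 1)
    ({θ | ‖θ - y‖ ≤ 2 * b}.indicator (fun _ => ENNReal.ofReal ((3/2) ^ (n-1))))
    (1 - b/2) (1 + b/2) (measurable_one.indicator measurableSet_ball)
    (measurable_const.indicator hm) (by
      intro θ hθ ρ hρ
      by_cases hc : ρ • θ ∈ ball e (b/2)
      · rw [indicator_of_mem hc]
        rw [mem_ball, dist_eq_norm] at hc
        have h1 : |ρ - 1| < b/2 := by
          have := abs_norm_sub_norm_le (ρ • θ) e
          rw [norm_smul, hθ, he, Real.norm_of_nonneg hρ.le, mul_one] at this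
          linarith
        have h2 := abs_lt.1 h1
        rw [indicator_of_mem (show ρ ∈ Icc (1 - b/2) (1 + b/2) from
          ⟨by linarith, by linarith⟩), indicator_of_mem]
        · simp only [Pi.one_apply, mul_one]
          apply ENNReal.ofReal_le_ofReal
          gcongr
          linarith
        · rw [mem_ofPred_eq]
          calc ‖θ - y‖ = ‖-(ρ • θ - θ) + (ρ • θ - e) + (e - y)‖ := by congr 1; abel
            _ ≤ |ρ - 1| + b/2 + b := by
              grw [norm_add_le, norm_add_le, norm_neg, nsmul_dist hθ, hc, hey]
            _ ≤ 2 * b := by linarith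
      · rw [indicator_of_notMem hc]; simp)
  rw [lintegral_indicator_one measurableSet_ball, lintegral_indicator hm, setLIntegral_const,
    vol_ball _ (by positivity), ← hV] at key
  have hd0 : ENNReal.ofReal b ≠ 0 := by simpa using hb0
  rw [← ENNReal.mul_le_mul_iff_left hd0 ENNReal.ofReal_ne_top, ← ENNReal.ofReal_mul (by positivity),
    ← pow_succ, Nat.sub_add_cancel (by omega)]
  calc ENNReal.ofReal (b ^ n) = 2 ^ n * (ENNReal.ofReal ((b/2)^n) * V) * V⁻¹ := by
        rw [← mul_assoc, mul_assoc _ V, ENNReal.mul_inv_cancel hpos hfin, mul_one]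
        rw [show (2:ℝ≥0∞) ^ n = ENNReal.ofReal (2 ^ n) by
          rw [ENNReal.ofReal_pow (by norm_num)]; simp, ← ENNReal.ofReal_mul (by positivity),
          ← mul_pow]
        congr 2; ring
    _ ≤ _ := by
        grw [key]
        apply le_of_eq
        rw [show 1 + b / 2 - (1 - b / 2) = b by ring]
        ring

lemma cap_pos {n : ℕ} (hn : 2 ≤ n) (θ₀ : Euc n) (h : ‖θ₀‖ = 1) {b : ℝ} (hb : 0 < b) :
    nu n {θ | ‖θ - θ₀‖ < b} ≠ 0 := by
  obtain ⟨C, hC⟩ := cap_lower hn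
  set c := min (b/4) 1
  have hc0 : 0 < c := by positivity
  have hc1 : c ≤ 1 := min_le_right _ _
  have hc2 : c ≤ b/4 := min_le_left _ _
  have hnorm : ‖(1 - c) • θ₀‖ = 1 - c := by
    rw [norm_smul, h, mul_one, Real.norm_of_nonneg (by linarith)]
  have := hC ((1 - c) • θ₀) (by rw [hnorm]; linarith)
  rw [hnorm] at this
  intro h0
  have h3 : nu n {θ | ‖θ - (1 - c) • θ₀‖ ≤ 2 * (1 - (1 - c))} = 0 := by
    refine measure_mono_null ?_ h0
    intro θ hθ
    simp only [mem_ofPred_eq] at hθ ⊢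
    calc ‖θ - θ₀‖ = ‖(θ - (1 - c) • θ₀) + ((1 - c) • θ₀ - θ₀)‖ := by congr 1; abel
      _ ≤ 2 * (1 - (1-c)) + |1 - c - 1| := by grw [norm_add_le, nsmul_dist h, hθ]
      _ < b := by rw [abs_of_neg (by linarith)]; linarith
  rw [h3] at this
  have : (1 - (1 - c)) ^ (n-1) ≤ 0 := by simpa using this
  have : 0 < (1 - (1 - c)) ^ (n-1) := by
    have : 1 - (1 - c) = c := by ring
    rw [this]; positivity
  linarith

lemma nu_le_hausdorff {n : ℕ} (hn : 2 ≤ n) : ∃ C : ℝ≥0,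
    nu n ≤ (C : ℝ≥0∞) • (Measure.hausdorffMeasure ((n : ℝ) - 1)).restrict (sphere (0 : Euc n) 1) := by
  obtain ⟨C, hC⟩ := cap_upper hn
  refine ⟨C + 1, ?_⟩
  have hC0 : ((C + 1 : ℝ≥0) : ℝ≥0∞) ≠ 0 := by simp
  have hCt : ((C + 1 : ℝ≥0) : ℝ≥0∞) ≠ ⊤ := ENNReal.coe_ne_top
  have h1 : (((C + 1 : ℝ≥0) : ℝ≥0∞)⁻¹) • nu n ≤ Measure.hausdorffMeasure ((n : ℝ) - 1) := by
    refine Measure.le_hausdorffMeasure _ _ 1 one_pos (fun s hs => ?_)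
    rcases s.eq_empty_or_nonempty with rfl | ⟨θ₀, h0⟩
    · simp
    have hst : ediam s ≠ ⊤ := ne_top_of_le_ne_top ENNReal.one_ne_top hs
    set d := (ediam s).toReal with hd
    have hd0 : 0 ≤ d := ENNReal.toReal_nonneg
    have h2 : ∀ ε > d, nu n s ≤ C * ENNReal.ofReal (ε ^ (n - 1)) := by
      intro ε hε
      refine le_trans (measure_mono ?_) (hC θ₀ ε (by linarith))
      intro θ hθ
      rw [mem_ofPred_eq, ← dist_eq_norm]
      have := edist_le_ediam_of_mem hθ h0
      rw [edist_dist] at this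
      have := ENNReal.toReal_mono hst this
      rw [ENNReal.toReal_ofReal dist_nonneg] at this
      linarith
    have h3 : nu n s ≤ C * ENNReal.ofReal (d ^ (n - 1)) := by
      have ht : Filter.Tendsto (fun ε : ℝ => (C : ℝ≥0∞) * ENNReal.ofReal (ε ^ (n - 1)))
          (nhdsWithin d (Ioi d)) (nhds (C * ENNReal.ofReal (d ^ (n - 1)))) := by
        apply Filter.Tendsto.mono_left _ nhdsWithin_le_nhds
        apply ENNReal.Tendsto.const_mul _ (Or.inr ENNReal.coe_ne_top)
        apply ENNReal.tendsto_ofReal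
        exact (continuous_pow (n-1)).tendsto d
      exact ge_of_tendsto ht (by filter_upwards [self_mem_nhdsWithin] with ε hε using h2 ε hε)
    have h4 : ENNReal.ofReal (d ^ (n - 1)) = ediam s ^ ((n : ℝ) - 1) := by
      have : ((n : ℝ) - 1) = ((n - 1 : ℕ) : ℝ) := by rw [Nat.cast_sub (by omega)]; simp
      rw [this, ENNReal.rpow_natCast, ENNReal.ofReal_pow hd0, hd, ENNReal.ofReal_toReal hst]
    rw [Measure.smul_apply, smul_eq_mul, ← h4]
    rw [ENNReal.inv_mul_le_iff hC0 hCt]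
    refine h3.trans ?_
    gcongr
    simp
  have h2 : nu n = (nu n).restrict (sphere (0 : Euc n) 1) := by
    symm
    apply Measure.restrict_eq_self_of_ae_mem
    filter_upwards [nu_ae_norm n] with θ hθ
    simpa using hθ
  have h3 : nu n ≤ ((C + 1 : ℝ≥0) : ℝ≥0∞) • Measure.hausdorffMeasure ((n : ℝ) - 1) := by
    intro s
    have := h1 s
    rw [Measure.smul_apply, smul_eq_mul, ENNReal.inv_mul_le_iff hC0 hCt] at this
    simpa using this
  rw [h2, ← Measure.restrict_smul]
  exact Measure.restrict_mono le_rfl h3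

lemma sphere_tail {n : ℕ} (hn : 2 ≤ n) {Q : ℝ} (hQ : (n : ℝ) < Q) : ∃ C : ℝ≥0,
    ∀ (θ : Euc n) (a : ℝ), 0 < a →
      ∫⁻ ω, {ω | a ≤ ‖θ - ω‖}.indicator (fun ω => ENNReal.ofReal ((‖θ - ω‖ ^ (Q - 1))⁻¹)) ω ∂(nu n)
        ≤ C * ENNReal.ofReal ((a ^ (Q - n))⁻¹) := by
  obtain ⟨C, hC⟩ := bracket (volume : Measure (Euc n)) (m := n) (by simp) hQ
  have hQ0 : 0 < Q := lt_of_le_of_lt (Nat.cast_nonneg n) hQ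
  refine ⟨Real.toNNReal (3 ^ Q) * C, fun θ a ha => ?_⟩
  have key := thick hn (fun x => ENNReal.ofReal (3 ^ Q) * ENNReal.ofReal ((a + ‖x - θ‖) ^ (-Q)))
    ({ω | a ≤ ‖θ - ω‖}.indicator (fun ω => ENNReal.ofReal ((‖θ - ω‖ ^ Q)⁻¹)))
    (fun ω => ‖θ - ω‖) (by fun_prop) (by
      intro ω hω ρ h1 h2
      by_cases hc : a ≤ ‖θ - ω‖
      · rw [indicator_of_mem (show ω ∈ {ω | a ≤ ‖θ - ω‖} from hc),
          ← ENNReal.ofReal_mul (by positivity)]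
        apply ENNReal.ofReal_le_ofReal
        have hb : ‖ρ • ω - θ‖ ≤ 2 * ‖θ - ω‖ := by
          calc ‖ρ • ω - θ‖ = ‖(ρ • ω - ω) - (θ - ω)‖ := by congr 1; abel
            _ ≤ |ρ - 1| + ‖θ - ω‖ := by grw [norm_sub_le, nsmul_dist hω]
            _ ≤ _ := by rw [abs_of_pos (by linarith)]; linarith
        have ht : 0 < ‖θ - ω‖ := by linarith
        rw [← Real.rpow_neg ht.le]
        calc ‖θ - ω‖ ^ (-Q) = 3 ^ Q * (3 * ‖θ - ω‖) ^ (-Q) := by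
              rw [Real.mul_rpow (by norm_num) ht.le, ← mul_assoc, ← Real.rpow_add (by norm_num)]
              simp
          _ ≤ _ := by
              gcongr ?_ * ?_
              apply Real.rpow_le_rpow_of_nonpos (by positivity) (by linarith) (by linarith)
      · rw [indicator_of_notMem (show ω ∉ {ω | a ≤ ‖θ - ω‖} from hc)]; simp)
  rw [lintegral_const_mul _ (by fun_prop)] at key
  grw [hC a ha θ] at key
  have e2 : ((Real.toNNReal (3 ^ Q) * C : ℝ≥0) : ℝ≥0∞) * ENNReal.ofReal ((a ^ (Q - n))⁻¹) =
      ENNReal.ofReal (3 ^ Q) * (C * ENNReal.ofReal (a ^ ((n : ℝ) - Q))) := by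
    push_cast
    rw [← Real.rpow_neg ha.le, mul_assoc]
    simp only [neg_sub]
    rfl
  rw [e2]
  refine le_trans (lintegral_mono fun ω => ?_) key
  by_cases hc : a ≤ ‖θ - ω‖
  · rw [indicator_of_mem (show ω ∈ {ω | a ≤ ‖θ - ω‖} from hc),
      indicator_of_mem (show ω ∈ {ω | a ≤ ‖θ - ω‖} from hc), ← ENNReal.ofReal_mul (by positivity)]
    apply ENNReal.ofReal_le_ofReal
    have ht : 0 < ‖θ - ω‖ := by linarith
    rw [Real.rpow_sub ht, Real.rpow_one, inv_div, div_eq_mul_inv, mul_comm]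
  · rw [indicator_of_notMem (show ω ∉ {ω | a ≤ ‖θ - ω‖} from hc)]; simp

lemma weak_sing {n : ℕ} (hn : 2 ≤ n) : ∃ C : ℝ≥0, ∀ θ : Euc n, ‖θ‖ = 1 →
    ∫⁻ y in ball (0 : Euc n) 1, ENNReal.ofReal ((‖θ - y‖ ^ (n - 1))⁻¹) ≤ C := by
  refine ⟨(ENNReal.ofReal (2 - 0) * ∫⁻ θ, 1 ∂(nu n)).toNNReal, fun θ hθ => ?_⟩
  rw [ENNReal.coe_toNNReal (ENNReal.mul_ne_top ENNReal.ofReal_ne_top (by simp))]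
  refine le_trans ?_ (thin hn ((ball (0 : Euc n) 2).indicator
    (fun y => ENNReal.ofReal ((‖y‖ ^ (n - 1))⁻¹))) (fun _ => 1) 0 2
    ((by fun_prop : Measurable _).indicator measurableSet_ball) measurable_const ?_)
  · rw [← lintegral_indicator measurableSet_ball,
      ← lintegral_sub_left_eq_self (fun y => (ball (0 : Euc n) 2).indicator
    (fun y => ENNReal.ofReal ((‖y‖ ^ (n - 1))⁻¹)) y) θ]
    apply lintegral_mono
    intro y
    beta_reduce
    by_cases hy : y ∈ ball (0 : Euc n) 1
    · rw [indicator_of_mem hy, indicator_of_mem]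
      rw [mem_ball_zero_iff] at hy ⊢
      grw [norm_sub_le]; linarith
    · rw [indicator_of_notMem hy]; simp
  · intro ω hω ρ hρ
    have hnorm : ‖ρ • ω‖ = ρ := by rw [norm_smul, hω, Real.norm_of_nonneg hρ.le, mul_one]
    by_cases hc : ρ • ω ∈ ball (0 : Euc n) 2
    · rw [indicator_of_mem hc]
      rw [mem_ball_zero_iff, hnorm] at hc
      rw [indicator_of_mem (show ρ ∈ Icc 0 2 from ⟨hρ.le, hc.le⟩), hnorm,
        ← ENNReal.ofReal_mul (by positivity), mul_inv_cancel₀ (by positivity)]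
      simp
    · rw [indicator_of_notMem hc]; simp

lemma J_bound {n : ℕ} (hn : 2 ≤ n) {s p : ℝ} (hs : 0 < s) (hs1 : s < 1) (hp : 1 < p) :
    ∃ C : ℝ≥0, ∀ (a : ℝ), 0 < a → ∀ x : Euc n,
      ∫⁻ y, ENNReal.ofReal ((min 1 (‖x - y‖ / a)) ^ p / ‖x - y‖ ^ ((n : ℝ) + s * p)) ≤
        C * ENNReal.ofReal (a ^ (-(s * p))) := by
  have : Nontrivial (Euc n) := by
    have : Nonempty (Fin n) := ⟨⟨0, by omega⟩⟩
    infer_instance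
  set f : ℝ → ℝ := fun ρ => (min 1 ρ) ^ p / ρ ^ ((n : ℝ) + s * p) with hf
  have hsp : 0 < s * p := by positivity
  have hcast : ∀ ρ : ℝ, ρ ^ (n - 1) = ρ ^ ((n : ℝ) - 1) := by
    intro ρ
    rw [← Real.rpow_natCast, Nat.cast_sub (by omega)]; simp
  have hint : Integrable (fun x : Euc n => f ‖x‖) := by
    rw [integrable_fun_norm_addHaar volume]
    have hdim : Module.finrank ℝ (Euc n) = n := by simp
    rw [hdim, ← Ioc_union_Ioi_eq_Ioi (zero_le_one' ℝ)]
    apply IntegrableOn.union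
    · have h1 : IntegrableOn (fun ρ : ℝ => ρ ^ (p - 1 - s * p)) (Ioc 0 1) := by
        rw [← intervalIntegrable_iff_integrableOn_Ioc_of_le zero_le_one]
        apply intervalIntegral.intervalIntegrable_rpow'
        nlinarith
      refine h1.congr_fun (fun ρ hρ => ?_) measurableSet_Ioc
      simp only [hf, smul_eq_mul]
      rw [min_eq_right hρ.2, hcast, ← Real.rpow_sub hρ.1, ← Real.rpow_add hρ.1]
      congr 1; ring
    · have h1 : IntegrableOn (fun ρ : ℝ => ρ ^ (-1 - s * p)) (Ioi 1) :=
        integrableOn_Ioi_rpow_of_lt (by linarith) one_pos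
      refine h1.congr_fun (fun ρ hρ => ?_) measurableSet_Ioi
      have hρ0 : (0:ℝ) < ρ := lt_trans one_pos hρ
      simp only [hf, smul_eq_mul]
      rw [min_eq_left (le_of_lt hρ), hcast, Real.one_rpow, one_div, ← Real.rpow_neg hρ0.le,
        ← Real.rpow_add hρ0]
      congr 1; ring
  have hfin := hint.lintegral_lt_top
  refine ⟨(∫⁻ x : Euc n, ENNReal.ofReal (f ‖x‖)).toNNReal, fun a ha x => ?_⟩
  rw [ENNReal.coe_toNNReal hfin.ne]
  rw [lintegral_sub_left_eq_self (fun y : Euc n =>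
    ENNReal.ofReal ((min 1 (‖y‖ / a)) ^ p / ‖y‖ ^ ((n : ℝ) + s * p))) x, lint_smul volume ha]
  have : ∀ y : Euc n, ENNReal.ofReal ((min 1 (‖a • y‖ / a)) ^ p / ‖a • y‖ ^ ((n : ℝ) + s * p)) =
      ENNReal.ofReal (a ^ (-((n : ℝ) + s * p))) * ENNReal.ofReal (f ‖y‖) := by
    intro y
    rw [norm_smul, Real.norm_of_nonneg ha.le, ← ENNReal.ofReal_mul (by positivity),
      mul_div_cancel_left₀ _ ha.ne', Real.mul_rpow ha.le (norm_nonneg _), Real.rpow_neg ha.le, hf]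
    congr 1
    simp only [div_eq_mul_inv, mul_inv]; ring
  simp_rw [this]
  rw [lintegral_const_mul _ (by fun_prop), ← mul_assoc, ← ENNReal.ofReal_mul (by positivity),
    mul_comm, ← Real.rpow_natCast, ← Real.rpow_add ha]
  apply le_of_eq
  congr 3
  simp

/-- The kernel `|a|^p / |d|^q`. -/
def kk {m n : ℕ} (p q : ℝ) (a : Euc m) (d : Euc n) : ℝ≥0∞ := ENNReal.ofReal (‖a‖ ^ p / ‖d‖ ^ q)

/-- The kernel `min(1,|d|/δ)^p / |d|^q`. -/
def JJ {n : ℕ} (p q δ : ℝ) (d : Euc n) : ℝ≥0∞ := ENNReal.ofReal ((min 1 (‖d‖ / δ)) ^ p / ‖d‖ ^ q)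

/-- Radial projection onto the unit sphere. -/
def PP {n : ℕ} (x : Euc n) : Euc n := (1 / ‖x‖) • x

@[fun_prop]
lemma meas_kk {α : Type*} [MeasurableSpace α] {m n : ℕ} {p q : ℝ} {a : α → Euc m} {d : α → Euc n}
    (ha : Measurable a) (hd : Measurable d) : Measurable (fun x => kk p q (a x) (d x)) := by
  unfold kk; fun_prop

@[fun_prop]
lemma meas_JJ {α : Type*} [MeasurableSpace α] {n : ℕ} {p q δ : ℝ} {d : α → Euc n}
    (hd : Measurable d) : Measurable (fun x => JJ p q δ (d x)) := by
  unfold JJ; fun_prop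

@[fun_prop]
lemma meas_PP {α : Type*} [MeasurableSpace α] {n : ℕ} {d : α → Euc n}
    (hd : Measurable d) : Measurable (fun x => PP (d x)) := by
  unfold PP; fun_prop

lemma PP_smul {n : ℕ} {θ : Euc n} (hθ : ‖θ‖ = 1) {ρ : ℝ} (hρ : 0 < ρ) : PP (ρ • θ) = θ := by
  unfold PP
  rw [norm_smul, hθ, Real.norm_of_nonneg hρ.le, smul_smul, mul_one, one_div,
    inv_mul_cancel₀ hρ.ne', one_smul]

lemma norm_PP {n : ℕ} {x : Euc n} (hx : 0 < ‖x‖) : ‖PP x‖ = 1 := by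
  unfold PP
  rw [norm_smul, Real.norm_of_nonneg (by positivity)]
  field_simp

lemma PP_dist {n : ℕ} {x : Euc n} (hx : 0 < ‖x‖) : ‖x - PP x‖ = |1 - ‖x‖| := by
  have h1 := nsmul_dist (norm_PP hx) ‖x‖
  have h2 : ‖x‖ • PP x = x := by
    unfold PP
    rw [smul_smul, mul_one_div_cancel hx.ne', one_smul]
  rw [h2] at h1
  rw [h1, abs_sub_comm]

lemma kk_zero {m n : ℕ} {p q : ℝ} (hp : 1 < p) (d : Euc n) : kk p q (0 : Euc m) d = 0 := by
  unfold kk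
  rw [norm_zero, Real.zero_rpow (by linarith)]; simp

lemma kk_symm {m n : ℕ} {p q : ℝ} (a b : Euc m) (c d : Euc n) :
    kk p q (a - b) (c - d) = kk p q (b - a) (d - c) := by
  unfold kk
  rw [norm_sub_rev a, norm_sub_rev c]

lemma kk_comp {m n : ℕ} {p q : ℝ} (hp : 1 < p) (hq : 0 < q) {c : ℝ} (hc : 0 < c) (a : Euc m)
    {d d' : Euc n} (h0 : d' = 0 → a = 0) (h : ‖d'‖ ≤ c * ‖d‖) :
    kk p q a d ≤ ENNReal.ofReal (c ^ q) * kk p q a d' := by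
  by_cases hd : d' = 0
  · rw [h0 hd, kk_zero hp]; simp
  unfold kk
  rw [← ENNReal.ofReal_mul (by positivity)]
  apply ENNReal.ofReal_le_ofReal
  have hd0 : 0 < ‖d'‖ := norm_pos_iff.2 hd
  have hd1 : 0 < ‖d‖ := by
    by_contra hcon
    have : ‖d‖ = 0 := le_antisymm (not_lt.1 hcon) (norm_nonneg _)
    rw [this] at h; linarith
  have h2 : ‖d'‖ ^ q ≤ c ^ q * ‖d‖ ^ q := by
    rw [← Real.mul_rpow hc.le hd1.le]
    exact Real.rpow_le_rpow hd0.le h hq.le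
  rw [← mul_div_assoc, div_le_div_iff₀ (by positivity) (by positivity)]
  have := mul_le_mul_of_nonneg_left h2 (show 0 ≤ ‖a‖ ^ p by positivity)
  linarith

lemma rpow_add3 {p : ℝ} (hp : 1 < p) {a b c : ℝ} (ha : 0 ≤ a) (hb : 0 ≤ b) (hc : 0 ≤ c) :
    (a + b + c) ^ p ≤ 3 ^ p * (a ^ p + b ^ p + c ^ p) := by
  have hA : 0 ≤ a ^ p := by positivity
  have hB : 0 ≤ b ^ p := by positivity
  have hC : 0 ≤ c ^ p := by positivity
  have key : ∀ m, 0 ≤ m → a ≤ m → b ≤ m → c ≤ m → (a + b + c) ^ p ≤ 3 ^ p * m ^ p := by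
    intro m hm h1 h2 h3
    rw [← Real.mul_rpow (by norm_num) hm]
    exact Real.rpow_le_rpow (by positivity) (by linarith) (by linarith)
  have h3 : (0:ℝ) ≤ 3 ^ p := by positivity
  rcases le_total a b with hab | hab
  · rcases le_total b c with hbc | hbc
    · exact (key c hc (hab.trans hbc) hbc le_rfl).trans (by gcongr; linarith)
    · exact (key b hb hab le_rfl hbc).trans (by gcongr; linarith)
  · rcases le_total a c with hbc | hbc
    · exact (key c hc hbc (hab.trans hbc) le_rfl).trans (by gcongr; linarith)
    · exact (key a ha le_rfl hab hbc).trans (by gcongr; linarith)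

lemma kk_add3 {m n : ℕ} {p q : ℝ} (hp : 1 < p) (a b c : Euc m) (d : Euc n) :
    kk p q (a + b + c) d ≤ ENNReal.ofReal (3 ^ p) * (kk p q a d + kk p q b d + kk p q c d) := by
  unfold kk
  rw [← ENNReal.ofReal_add (by positivity) (by positivity),
    ← ENNReal.ofReal_add (by positivity) (by positivity), ← ENNReal.ofReal_mul (by positivity)]
  apply ENNReal.ofReal_le_ofReal
  rw [← add_div, ← add_div, ← mul_div_assoc]
  gcongr
  refine le_trans (Real.rpow_le_rpow (by positivity) ?_ (by linarith))
    (rpow_add3 hp (norm_nonneg a) (norm_nonneg b) (norm_nonneg c))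
  grw [norm_add_le, norm_add_le]

lemma kk_add2 {m n : ℕ} {p q : ℝ} (hp : 1 < p) (a b : Euc m) (d : Euc n) :
    kk p q (a + b) d ≤ ENNReal.ofReal (3 ^ p) * (kk p q a d + kk p q b d) := by
  have := kk_add3 (q := q) hp a b 0 d
  rwa [add_zero, kk_zero hp, add_zero] at this

lemma kk_mono {m m' n : ℕ} {p q : ℝ} (hp : 1 < p) {a : Euc m} {b : Euc m'} (d : Euc n)
    (h : ‖a‖ ≤ ‖b‖) : kk p q a d ≤ kk p q b d := by
  unfold kk
  apply ENNReal.ofReal_le_ofReal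
  have : 0 ≤ p := by linarith
  gcongr

lemma kk_cut {m n : ℕ} {p q δ S g : ℝ} (hp : 1 < p) (hS : 0 ≤ S) (hδ : 0 < δ) {a : Euc m} (d : Euc n)
    (ha : ‖a‖ ≤ S) (hg : |g| ≤ 100 * min 1 (‖d‖ / δ)) :
    kk p q (g • a) d ≤ ENNReal.ofReal (100 ^ p) * (ENNReal.ofReal (S ^ p) * JJ p q δ d) := by
  unfold kk JJ
  have hm : 0 ≤ min 1 (‖d‖ / δ) := by positivity
  rw [← ENNReal.ofReal_mul (by positivity), ← ENNReal.ofReal_mul (by positivity)]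
  apply ENNReal.ofReal_le_ofReal
  rw [← mul_div_assoc, ← mul_div_assoc]
  gcongr
  rw [← Real.mul_rpow hS hm, ← Real.mul_rpow (by norm_num) (by positivity)]
  apply Real.rpow_le_rpow (by positivity) _ (by linarith)
  rw [norm_smul, Real.norm_eq_abs]
  calc |g| * ‖a‖ ≤ (100 * min 1 (‖d‖ / δ)) * S := by gcongr
    _ = _ := by ring

/-- integrating a `0`-homogeneous function over the annulus -/
lemma int_PP {n : ℕ} (hn : 2 ≤ n) {δ : ℝ} (hδ : 0 < δ) (hδ1 : δ < 1) (G : Euc n → ℝ≥0∞)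
    (hG : Measurable G) :
    ∫⁻ y in annS n δ, G (PP y) ≤ ENNReal.ofReal δ * ∫⁻ θ, G θ ∂(nu n) := by
  refine (polarN hn δ (fun y => G (PP y)) (by fun_prop)).trans ?_
  rw [← lintegral_const_mul _ hG]
  apply lintegral_mono_ae
  filter_upwards [nu_ae_norm n] with θ hθ
  calc _ = ∫⁻ ρ in Ico (1 - δ) 1, G θ := by
        apply setLIntegral_congr_fun measurableSet_Ico
        intro ρ hρ
        beta_reduce
        rw [PP_smul hθ (by linarith [hρ.1])]
    _ ≤ _ := by rw [setLIntegral_const, Real.volume_Ico, mul_comm, show 1 - (1 - δ) = δ by ring]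

lemma scaleI {n : ℕ} {δ : ℝ} (hδ : 0 < δ) (hδ1 : δ < 1) (f : Euc n → ℝ≥0∞) :
    ∫⁻ y in ball (0 : Euc n) (1 - δ), f ((1 - δ)⁻¹ • y) ≤ ∫⁻ z in ball (0 : Euc n) 1, f z := by
  have hc : 0 < (1 - δ)⁻¹ := inv_pos.2 (by linarith)
  rw [lint_smul_set volume hc (ball 0 1) f]
  have h1 : (fun x : Euc n => (1 - δ)⁻¹ • x) ⁻¹' ball 0 1 = ball 0 (1 - δ) := by
    ext x
    rw [mem_preimage, mem_ball_zero_iff, mem_ball_zero_iff, norm_smul, Real.norm_of_nonneg hc.le,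
      inv_mul_lt_iff₀ (by linarith), mul_one]
  rw [h1]
  refine le_mul_of_one_le_left zero_le ?_
  rw [ENNReal.one_le_ofReal]
  apply one_le_pow₀
  rw [one_le_inv₀ (by linarith)]; linarith

/-- the annulus-annulus term -/
lemma int_NN {n : ℕ} (hn : 2 ≤ n) {s p : ℝ} (hs : 0 < s) (hp : 1 < p) :
    ∃ C : ℝ≥0, ∀ (M : ℕ) (δ : ℝ), 0 < δ → δ < 1/4 → ∀ f : Euc n → Euc M, Measurable f →
      ∫⁻ x in annS n δ, ∫⁻ y in annS n δ, kk p (n + s * p) (f (PP x) - f (PP y)) (x - y) ≤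
        C * (ENNReal.ofReal δ *
          ∫⁻ θ, ∫⁻ ω, kk p (n - 1 + s * p) (f θ - f ω) (θ - ω) ∂(nu n) ∂(nu n)) := by
  have hsp : 0 < s * p := by positivity
  have hn' : (2:ℝ) ≤ n := by exact_mod_cast hn
  set q : ℝ := n + s * p with hq
  obtain ⟨C, hC⟩ := bracket (volume : Measure ℝ) (m := 1) (by simp) (q := q) (by push_cast; linarith)
  refine ⟨Real.toNNReal (4 ^ q) * C, fun M δ hδ hδ1 f hf => ?_⟩
  have h1 : ∀ θ, ‖θ‖ = 1 → ∀ ρ ∈ Ico (1 - δ) 1, ∀ ω, ‖ω‖ = 1 →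
      ∫⁻ τ in Ico (1 - δ) 1, kk p q (f (PP (ρ • θ)) - f (PP (τ • ω))) (ρ • θ - τ • ω) ≤
        ENNReal.ofReal (4 ^ q) * C * kk p (n - 1 + s * p) (f θ - f ω) (θ - ω) := by
    intro θ hθ ρ hρ ω hω
    by_cases hne : θ = ω
    · subst hne
      rw [setLIntegral_congr_fun (g := fun _ => 0) measurableSet_Ico]
      · simp
      · intro τ hτ
        beta_reduce
        rw [PP_smul hθ (by linarith [hρ.1]), PP_smul hθ (by linarith [hτ.1]), sub_self, kk_zero hp]
    have ht : 0 < ‖θ - ω‖ := norm_pos_iff.2 (sub_ne_zero.2 hne)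
    have h2 : ∀ τ ∈ Ico (1 - δ) 1,
        kk p q (f (PP (ρ • θ)) - f (PP (τ • ω))) (ρ • θ - τ • ω) ≤
          ENNReal.ofReal (4 ^ q * ‖f θ - f ω‖ ^ p) *
            ENNReal.ofReal ((‖θ - ω‖ + ‖τ - ρ‖) ^ (-q)) := by
      intro τ hτ
      rw [PP_smul hθ (by linarith [hρ.1]), PP_smul hω (by linarith [hτ.1])]
      have e1 : |ρ - τ| ≤ ‖ρ • θ - τ • ω‖ := by
        have := abs_norm_sub_norm_le (ρ • θ) (τ • ω)
        rwa [norm_smul, norm_smul, hθ, hω, mul_one, mul_one,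
          Real.norm_of_nonneg (by linarith [hρ.1]), Real.norm_of_nonneg (by linarith [hτ.1])] at this
      have e2 : ρ * ‖θ - ω‖ ≤ ‖ρ • θ - τ • ω‖ + |ρ - τ| := by
        calc ρ * ‖θ - ω‖ = ‖(ρ • θ - τ • ω) - (ρ - τ) • ω‖ := by
              rw [show (ρ • θ - τ • ω) - (ρ - τ) • ω = ρ • (θ - ω) by
                rw [sub_smul, smul_sub]; abel, norm_smul, Real.norm_of_nonneg (by linarith [hρ.1])]
          _ ≤ _ := by grw [norm_sub_le, norm_smul, hω, mul_one, Real.norm_eq_abs]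
      have e3 : 3/4 * ‖θ - ω‖ ≤ ρ * ‖θ - ω‖ := by gcongr; linarith [hρ.1]
      have e4 : ‖θ - ω‖ + ‖τ - ρ‖ ≤ 4 * ‖ρ • θ - τ • ω‖ := by
        rw [Real.norm_eq_abs, abs_sub_comm]; linarith
      have e5 : 0 < ‖ρ • θ - τ • ω‖ := by nlinarith [norm_nonneg (τ - ρ)]
      unfold kk
      rw [← ENNReal.ofReal_mul (by positivity)]
      apply ENNReal.ofReal_le_ofReal
      rw [div_eq_mul_inv, ← Real.rpow_neg e5.le, mul_comm (4 ^ q), mul_assoc]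
      gcongr
      calc ‖ρ • θ - τ • ω‖ ^ (-q) = 4 ^ q * (4 * ‖ρ • θ - τ • ω‖) ^ (-q) := by
            rw [Real.mul_rpow (by norm_num) e5.le, ← mul_assoc, ← Real.rpow_add (by norm_num)]
            simp
        _ ≤ _ := by
            gcongr ?_ * ?_
            exact Real.rpow_le_rpow_of_nonpos (by positivity) e4 (by linarith)
    refine (setLIntegral_mono' measurableSet_Ico h2).trans ?_
    refine (setLIntegral_le_lintegral _ _).trans ?_
    rw [lintegral_const_mul _ (by fun_prop)]
    grw [hC _ ht ρ]
    apply le_of_eq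
    unfold kk
    rw [ENNReal.ofReal_mul (by positivity), ENNReal.ofReal_div_of_pos (by positivity),
      div_eq_mul_inv, ← ENNReal.ofReal_inv_of_pos (by positivity), ← Real.rpow_neg ht.le]
    rw [show (((1:ℕ):ℝ) - q) = -(n - 1 + s * p) by rw [hq]; push_cast; ring]
    ring
  calc _ ≤ ∫⁻ x in annS n δ, ∫⁻ ω, (∫⁻ τ in Ico (1 - δ) 1,
        kk p q (f (PP x) - f (PP (τ • ω))) (x - τ • ω)) ∂(nu n) := by
        apply lintegral_mono
        intro x
        exact polarN hn δ _ (by fun_prop)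
    _ ≤ ∫⁻ θ, (∫⁻ ρ in Ico (1 - δ) 1, ∫⁻ ω, (∫⁻ τ in Ico (1 - δ) 1,
        kk p q (f (PP (ρ • θ)) - f (PP (τ • ω))) (ρ • θ - τ • ω)) ∂(nu n)) ∂(nu n) := by
        apply polarN hn δ (fun x => ∫⁻ ω, (∫⁻ τ in Ico (1 - δ) 1,
          kk p q (f (PP x) - f (PP (τ • ω))) (x - τ • ω)) ∂(nu n))
        apply Measurable.lintegral_prod_right
        apply Measurable.lintegral_prod_right
        fun_prop
    _ ≤ ∫⁻ θ, (∫⁻ ρ in Ico (1 - δ) 1, ENNReal.ofReal (4 ^ q) * C *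
          ∫⁻ ω, kk p (n - 1 + s * p) (f θ - f ω) (θ - ω) ∂(nu n)) ∂(nu n) := by
        apply lintegral_mono_ae
        filter_upwards [nu_ae_norm n] with θ hθ
        apply setLIntegral_mono' measurableSet_Ico
        intro ρ hρ
        rw [← lintegral_const_mul _ (by fun_prop)]
        apply lintegral_mono_ae
        filter_upwards [nu_ae_norm n] with ω hω
        exact h1 θ hθ ρ hρ ω hω
    _ = _ := by
        simp_rw [setLIntegral_const, Real.volume_Ico]
        rw [lintegral_mul_const, lintegral_const_mul]
        · rw [show 1 - (1 - δ) = δ by ring]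
          push_cast
          rw [← ENNReal.ofReal]
          ring
        · apply Measurable.lintegral_prod_right
          fun_prop
        · apply Measurable.const_mul
          apply Measurable.lintegral_prod_right
          fun_prop

/-- averaging kernel used for the trace estimate -/
def HH {m n : ℕ} (p Q : ℝ) (v : Euc n → Euc m) (θ ω z : Euc n) : ℝ≥0∞ :=
  ENNReal.ofReal (‖v θ - v z‖ ^ p) *
    {ω' : Euc n | ‖θ - z‖ / 2 ≤ ‖θ - ω'‖}.indicator (fun ω' => ENNReal.ofReal ((‖θ - ω'‖ ^ (Q - 1))⁻¹)) ω

@[fun_prop]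
lemma meas_HH {α : Type*} [MeasurableSpace α] {m n : ℕ} {p Q : ℝ} {v : Euc n → Euc m}
    (hv : Measurable v) {a b c : α → Euc n} (ha : Measurable a) (hb : Measurable b)
    (hc : Measurable c) : Measurable (fun x => HH p Q v (a x) (b x) (c x)) := by
  unfold HH
  apply Measurable.mul (by fun_prop)
  simp only [indicator, mem_ofPred_eq]
  apply Measurable.ite _ (by fun_prop) (by fun_prop)
  exact measurableSet_le (by fun_prop) (by fun_prop)

lemma sum_swap {α : Type*} [MeasurableSpace α] {μ : Measure α} [SFinite μ] (K : ℝ≥0∞)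
    (G : α → α → ℝ≥0∞) (hG : Measurable (fun z : α × α => G z.1 z.2)) :
    ∫⁻ θ, ∫⁻ ω, K * (G θ ω + G ω θ) ∂μ ∂μ = K * (2 * ∫⁻ θ, ∫⁻ ω, G θ ω ∂μ ∂μ) := by
  have hG' : Measurable (fun z : α × α => G z.2 z.1) := hG.comp measurable_swap
  have h1 : ∀ θ, Measurable (fun ω => G θ ω) := fun θ => hG.comp measurable_prodMk_left
  have h2 : ∀ θ, Measurable (fun ω => G ω θ) := fun θ => hG.comp measurable_prodMk_right
  have e : ∀ θ, ∫⁻ ω, K * (G θ ω + G ω θ) ∂μ = K * ((∫⁻ ω, G θ ω ∂μ) + ∫⁻ ω, G ω θ ∂μ) := by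
    intro θ
    rw [lintegral_const_mul _ (by exact (h1 θ).add (h2 θ)), lintegral_add_left (h1 θ)]
  simp_rw [e]
  have m1 : Measurable (fun θ => ∫⁻ ω, G θ ω ∂μ) := Measurable.lintegral_prod_right hG
  have m2 : Measurable (fun θ => ∫⁻ ω, G ω θ ∂μ) := Measurable.lintegral_prod_right hG'
  rw [lintegral_const_mul _ (by exact m1.add m2), lintegral_add_left m1,
    lintegral_lintegral_swap (f := fun θ ω => G ω θ) hG'.aemeasurable, two_mul]

lemma int_Dv {n : ℕ} (hn : 2 ≤ n) {s p : ℝ} (hs : 0 < s) (hp : 1 < p) :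
    ∃ C : ℝ≥0, ∀ (M : ℕ) (v : Euc n → Euc M), Measurable v →
      ∫⁻ θ, ∫⁻ ω, kk p (n - 1 + s * p) (v θ - v ω) (θ - ω) ∂(nu n) ∂(nu n) ≤
        C * ∫⁻ θ, (∫⁻ z in ball (0 : Euc n) 1, kk p (n + s * p) (v θ - v z) (θ - z)) ∂(nu n) := by
  have hsp : 0 < s * p := by positivity
  have hn' : (2:ℝ) ≤ n := by exact_mod_cast hn
  set q : ℝ := n + s * p with hq
  have hq0 : 0 < q := by positivity
  obtain ⟨C, hC⟩ := sphere_tail hn (Q := n + q) (by linarith)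
  set V := volume (ball (0 : Euc n) 1) with hV
  have hV0 : V ≠ 0 := (measure_ball_pos _ _ one_pos).ne'
  have hVt : V ≠ ⊤ := measure_ball_lt_top.ne
  set K : ℝ≥0∞ := ENNReal.ofReal (4 ^ n) * V⁻¹ * ENNReal.ofReal (3 ^ p) with hK
  have hKt : K ≠ ⊤ := by
    rw [hK]
    exact ENNReal.mul_ne_top (ENNReal.mul_ne_top ENNReal.ofReal_ne_top (ENNReal.inv_ne_top.2 hV0)) ENNReal.ofReal_ne_top
  refine ⟨2 * K.toNNReal * C * Real.toNNReal (2 ^ q), fun M v hv => ?_⟩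
  have h1 : ∀ θ : Euc n, ‖θ‖ = 1 → ∀ ω : Euc n, ‖ω‖ = 1 →
      kk p (n - 1 + s * p) (v θ - v ω) (θ - ω) ≤
        K * ∫⁻ z in ball (0 : Euc n) 1, (HH p (n + q) v θ ω z + HH p (n + q) v ω θ z) := by
    intro θ hθ ω hω
    by_cases hne : θ = ω
    · rw [hne, sub_self, kk_zero hp]; simp
    set t := ‖θ - ω‖ with ht'
    have ht : 0 < t := norm_pos_iff.2 (sub_ne_zero.2 hne)
    have ht2 : t ≤ 2 := by
      have := norm_sub_le θ ω
      linarith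
    set Z := ball ((1 - t / 4) • θ) (t / 4) with hZ
    have hzz : ∀ z ∈ Z, ‖θ - z‖ ≤ t / 2 := by
      intro z hz
      rw [hZ, mem_ball_iff_norm] at hz
      have h3 := nsmul_dist hθ (1 - t / 4)
      rw [show 1 - t / 4 - 1 = -(t/4) by ring, abs_neg, abs_of_pos (by positivity)] at h3
      have := norm_sub_le_norm_sub_add_norm_sub θ ((1 - t / 4) • θ) z
      rw [norm_sub_rev θ ((1 - t / 4) • θ), norm_sub_rev ((1 - t / 4) • θ) z] at this
      linarith
    have hsub : Z ⊆ ball 0 1 := by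
      intro z hz
      rw [hZ, mem_ball_iff_norm] at hz
      rw [mem_ball_zero_iff]
      have h3 : ‖z‖ ≤ ‖z - (1 - t / 4) • θ‖ + ‖(1 - t / 4) • θ‖ := by
        simpa using norm_add_le (z - (1 - t / 4) • θ) ((1 - t / 4) • θ)
      rw [norm_smul, hθ, Real.norm_of_nonneg (by linarith)] at h3
      linarith
    have hpt : ∀ z ∈ Z, kk p (n - 1 + s * p) (v θ - v ω) (θ - ω) * ENNReal.ofReal (t ^ (-(n:ℝ))) ≤
        ENNReal.ofReal (3 ^ p) * (HH p (n + q) v θ ω z + HH p (n + q) v ω θ z) := by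
      intro z hz
      have h3 := hzz z hz
      have h4 : ‖ω - z‖ / 2 ≤ t := by
        have := norm_sub_le_norm_sub_add_norm_sub ω θ z
        rw [norm_sub_rev ω θ] at this
        linarith
      unfold HH
      rw [indicator_of_mem (by rw [mem_ofPred_eq]; linarith),
        indicator_of_mem (by rw [mem_ofPred_eq, norm_sub_rev ω θ]; exact h4), norm_sub_rev ω θ, ← ht']
      unfold kk
      rw [← ENNReal.ofReal_mul (by positivity), ← ENNReal.ofReal_mul (by positivity),
        ← ENNReal.ofReal_mul (by positivity), ← ENNReal.ofReal_add (by positivity) (by positivity),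
        ← ENNReal.ofReal_mul (by positivity)]
      apply ENNReal.ofReal_le_ofReal
      rw [← ht', ← add_mul, ← mul_assoc, div_eq_mul_inv, mul_assoc]
      have e1 : (t ^ ((n:ℝ) - 1 + s * p))⁻¹ * t ^ (-(n:ℝ)) = (t ^ (↑n + q - 1))⁻¹ := by
        rw [← Real.rpow_neg ht.le, ← Real.rpow_neg ht.le, ← Real.rpow_add ht]
        congr 1; rw [hq]; ring
      rw [e1]
      gcongr
      have e2 := rpow_add3 hp (norm_nonneg (v θ - v z)) (norm_nonneg (v ω - v z)) le_rfl
      rw [add_zero, Real.zero_rpow (by linarith), add_zero] at e2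
      refine le_trans (Real.rpow_le_rpow (by positivity) ?_ (by linarith)) e2
      rw [norm_sub_rev (v ω)]
      exact norm_sub_le_norm_sub_add_norm_sub _ _ _
    have hvol : volume Z = ENNReal.ofReal ((t / 4) ^ n) * V := vol_ball _ (by positivity)
    have hint : kk p (n - 1 + s * p) (v θ - v ω) (θ - ω) * ENNReal.ofReal (t ^ (-(n:ℝ))) *
        (ENNReal.ofReal ((t / 4) ^ n) * V) ≤ ENNReal.ofReal (3 ^ p) *
          ∫⁻ z in ball (0 : Euc n) 1, (HH p (n + q) v θ ω z + HH p (n + q) v ω θ z) := by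
      rw [← hvol, ← setLIntegral_const, ← lintegral_const_mul _ (by fun_prop)]
      exact (setLIntegral_mono' measurableSet_ball hpt).trans (lintegral_mono_set hsub)
    rw [hK, mul_assoc]
    refine le_trans (le_of_eq ?_) (mul_le_mul_right hint _)
    have e3 : ENNReal.ofReal (4 ^ n) * (ENNReal.ofReal (t ^ (-(n:ℝ))) * ENNReal.ofReal ((t / 4) ^ n)) = 1 := by
      rw [← ENNReal.ofReal_mul (by positivity), ← ENNReal.ofReal_mul (by positivity),
        Real.rpow_neg ht.le, Real.rpow_natCast, div_pow]
      rw [show (4:ℝ) ^ n * ((t ^ n)⁻¹ * (t ^ n / 4 ^ n)) = 1 by field_simp]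
      simp
    calc _ = kk p (n - 1 + s * p) (v θ - v ω) (θ - ω) * (ENNReal.ofReal (4 ^ n) *
          (ENNReal.ofReal (t ^ (-(n:ℝ))) * ENNReal.ofReal ((t / 4) ^ n))) * (V⁻¹ * V) := by
          rw [e3, ENNReal.inv_mul_cancel hV0 hVt, mul_one, mul_one]
      _ = _ := by ring
  have h2 : ∫⁻ θ, (∫⁻ z in ball (0 : Euc n) 1, ∫⁻ ω, HH p (n + q) v θ ω z ∂(nu n)) ∂(nu n) ≤
      C * ENNReal.ofReal (2 ^ q) *
        ∫⁻ θ, (∫⁻ z in ball (0 : Euc n) 1, kk p q (v θ - v z) (θ - z)) ∂(nu n) := by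
    rw [← lintegral_const_mul _ (by apply Measurable.lintegral_prod_right; fun_prop)]
    apply lintegral_mono_ae
    filter_upwards [nu_ae_norm n] with θ hθ
    rw [← lintegral_const_mul _ (by fun_prop)]
    apply setLIntegral_mono' measurableSet_ball
    intro z hz
    have hpos : 0 < ‖θ - z‖ := by
      rw [mem_ball_zero_iff] at hz
      have := norm_sub_norm_le θ z
      linarith
    unfold HH
    rw [lintegral_const_mul _ (by
      apply Measurable.indicator (by fun_prop)
      exact measurableSet_le (by fun_prop) (by fun_prop))]
    grw [hC θ (‖θ - z‖ / 2) (by positivity)]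
    apply le_of_eq
    unfold kk
    rw [show (n:ℝ) + q - n = q by ring, Real.div_rpow hpos.le (by norm_num), inv_div, div_eq_mul_inv,
      div_eq_mul_inv, ENNReal.ofReal_mul (by positivity), ENNReal.ofReal_mul (by positivity)]
    ring
  have hswap : ∀ θ, ∫⁻ ω, (∫⁻ z in ball (0 : Euc n) 1, HH p (n + q) v θ ω z) ∂(nu n) =
      ∫⁻ z in ball (0 : Euc n) 1, ∫⁻ ω, HH p (n + q) v θ ω z ∂(nu n) := by
    intro θ
    apply lintegral_lintegral_swap
    fun_prop
  have hmeas2 : Measurable (fun θω : Euc n × Euc n => ∫⁻ z in ball (0 : Euc n) 1, HH p (n + q) v θω.1 θω.2 z) := by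
    apply Measurable.lintegral_prod_right; fun_prop
  calc _ ≤ ∫⁻ θ, ∫⁻ ω, K * ((∫⁻ z in ball (0 : Euc n) 1, HH p (n + q) v θ ω z) +
        ∫⁻ z in ball (0 : Euc n) 1, HH p (n + q) v ω θ z) ∂(nu n) ∂(nu n) := by
        apply lintegral_mono_ae
        filter_upwards [nu_ae_norm n] with θ hθ
        apply lintegral_mono_ae
        filter_upwards [nu_ae_norm n] with ω hω
        have := h1 θ hθ ω hω
        rwa [lintegral_add_left (by fun_prop)] at this
    _ = K * (2 * ∫⁻ θ, (∫⁻ z in ball (0 : Euc n) 1, ∫⁻ ω, HH p (n + q) v θ ω z ∂(nu n)) ∂(nu n)) := by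
        rw [sum_swap K _ hmeas2]
        simp_rw [hswap]
    _ ≤ _ := by
        grw [h2]
        apply le_of_eq
        push_cast
        rw [ENNReal.coe_toNNReal hKt, ← ENNReal.ofReal]
        ring

lemma comb3 (a b c X Y Z : ℝ≥0∞) : a * X + b * Y + c * Z ≤ (a + b + c) * (X + Y + Z) := by
  have h1 : X ≤ X + Y + Z := by rw [add_assoc]; exact le_self_add
  have h2 : Y ≤ X + Y + Z := by rw [add_comm X Y, add_assoc]; exact le_self_add
  have h3 : Z ≤ X + Y + Z := le_add_self
  rw [add_mul, add_mul]
  gcongr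

lemma EI_pt {n : ℕ} (hn : 2 ≤ n) {s p : ℝ} (hs : 0 < s) (hp : 1 < p) :
    ∃ C : ℝ≥0, ∀ (M : ℕ) (δ S : ℝ), 0 < δ → δ < 1/4 → 0 ≤ S → ∀ u v : Euc n → Euc M,
      Measurable u → Measurable v → (∀ θ, ‖θ‖ = 1 → ‖u θ - v θ‖ ≤ S) →
      ∀ x y : Euc n, 1 ≤ ‖x‖ → ‖y‖ < 1 - δ →
        kk p (n + s * p) (u x - v ((1 - δ)⁻¹ • y)) (x - y) ≤
          C * ((∫⁻ θ, kk p (n + s * p) (u θ - u x) (θ - x) *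
              ENNReal.ofReal ((‖θ - y‖ ^ (n - 1))⁻¹) ∂(nu n)) +
            ENNReal.ofReal (S ^ p) * JJ p (n + s * p) δ (x - y) +
            ∫⁻ θ, kk p (n + s * p) (v θ - v ((1 - δ)⁻¹ • y)) (θ - (1 - δ)⁻¹ • y) *
              (ENNReal.ofReal ((1 - ‖y‖) ^ (n + s * p - (n - 1))) *
                ENNReal.ofReal ((1 - ‖y‖ + ‖x - y‖) ^ (-(n + s * p)))) ∂(nu n)) := by
  have hsp : 0 < s * p := by positivity
  have hn' : (2:ℝ) ≤ n := by exact_mod_cast hn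
  set q : ℝ := n + s * p with hq
  have hq0 : 0 < q := by positivity
  obtain ⟨C1, hC1⟩ := cap_lower hn
  obtain ⟨C2, hC2⟩ := cap_upper hn
  set a1 : ℝ≥0∞ := ENNReal.ofReal (2 ^ (n - 1) * 3 ^ q) with ha1
  set a2 : ℝ≥0∞ := ENNReal.ofReal (100 ^ p) * C2 * ENNReal.ofReal (2 ^ (n - 1)) with ha2
  set a3 : ℝ≥0∞ := ENNReal.ofReal (6 ^ q) with ha3
  set K : ℝ≥0∞ := C1 * ENNReal.ofReal (3 ^ p) * (a1 + a2 + a3) with hK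
  have hKt : K ≠ ⊤ := by
    rw [hK, ha1, ha2, ha3]
    finiteness
  refine ⟨K.toNNReal, fun M δ S hδ hδ1 hS u v hu hv hSuv x y hx hy => ?_⟩
  rw [ENNReal.coe_toNNReal hKt]
  set b := 1 - ‖y‖ with hb
  have hbδ : δ ≤ b := by linarith
  have hb0 : 0 < b := by linarith
  set z := (1 - δ)⁻¹ • y with hz
  have hxy : b ≤ ‖x - y‖ := by
    have := norm_sub_norm_le x y
    linarith
  have hxy0 : 0 < ‖x - y‖ := by linarith
  have hcy : ‖y - z‖ ≤ b := by
    have : y - z = -((δ * (1 - δ)⁻¹) • y) := by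
      rw [hz, ← neg_smul]
      nth_rewrite 1 [← one_smul ℝ y]
      rw [← sub_smul]
      congr 1
      have : 1 - δ ≠ 0 := by linarith
      field_simp
      ring
    have h1δ : 0 < (1 - δ)⁻¹ := inv_pos.2 (by linarith)
    rw [this, norm_neg, norm_smul, Real.norm_of_nonneg (by positivity)]
    calc δ * (1 - δ)⁻¹ * ‖y‖ ≤ δ * (1 - δ)⁻¹ * (1 - δ) := by gcongr
      _ = δ := by
        have : 1 - δ ≠ 0 := by linarith
        field_simp
      _ ≤ b := hbδ
  have hz1 : ‖z‖ < 1 := by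
    rw [hz, norm_smul, Real.norm_of_nonneg (inv_pos.2 (by linarith)).le, inv_mul_lt_iff₀ (by linarith)]
    linarith
  set β := ENNReal.ofReal ((b ^ (n - 1))⁻¹) with hβ
  set Γ : Set (Euc n) := {θ | ‖θ - y‖ ≤ 2 * b} with hΓ
  have hΓm : MeasurableSet Γ := measurableSet_le (by fun_prop) (by fun_prop)
  set k := kk p q (u x - v z) (x - y) with hk
  have hpt : ∀ θ : Euc n, ‖θ‖ = 1 → θ ∈ Γ → β * k ≤ ENNReal.ofReal (3 ^ p) *
      (a1 * (kk p q (u θ - u x) (θ - x) * ENNReal.ofReal ((‖θ - y‖ ^ (n - 1))⁻¹)) +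
       ENNReal.ofReal (100 ^ p) * (ENNReal.ofReal (S ^ p) * JJ p q δ (x - y)) * β +
       a3 * (kk p q (v θ - v z) (θ - z) *
         (ENNReal.ofReal (b ^ (q - (n - 1))) * ENNReal.ofReal ((b + ‖x - y‖) ^ (-q))))) := by
    intro θ hθ hθΓ
    rw [hΓ, mem_ofPred_eq] at hθΓ
    have hθy : 0 < ‖θ - y‖ := by
      have := norm_sub_norm_le θ y
      linarith
    have e0 : u x - v z = (u x - u θ) + (u θ - v θ) + (v θ - v z) := by abel
    have e1 : kk p q (u x - u θ) (x - y) ≤ ENNReal.ofReal (3 ^ q) * kk p q (u x - u θ) (x - θ) := by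
      apply kk_comp hp hq0 (by norm_num)
      · intro h
        rw [sub_eq_zero.1 h, sub_self]
      · have := norm_sub_le_norm_sub_add_norm_sub x y θ
        rw [norm_sub_rev y θ] at this
        linarith
    have e1' : β ≤ ENNReal.ofReal (2 ^ (n - 1)) * ENNReal.ofReal ((‖θ - y‖ ^ (n - 1))⁻¹) := by
      rw [← ENNReal.ofReal_mul (by positivity)]
      apply ENNReal.ofReal_le_ofReal
      rw [← div_eq_mul_inv, inv_eq_one_div, div_le_div_iff₀ (by positivity) (by positivity), one_mul,
        ← mul_pow]
      exact pow_le_pow_left₀ hθy.le hθΓ _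
    have e2 : kk p q (u θ - v θ) (x - y) ≤ ENNReal.ofReal (100 ^ p) * (ENNReal.ofReal (S ^ p) * JJ p q δ (x - y)) := by
      have := kk_cut (q := q) (g := 1) hp hS hδ (x - y) (hSuv θ hθ) (by
        rw [min_eq_left (by rw [one_le_div hδ]; linarith)]; norm_num)
      rwa [one_smul] at this
    have e3 : β * kk p q (v θ - v z) (x - y) ≤ a3 * (kk p q (v θ - v z) (θ - z) *
         (ENNReal.ofReal (b ^ (q - (n - 1))) * ENNReal.ofReal ((b + ‖x - y‖) ^ (-q)))) := by
      have hθz : 0 < ‖θ - z‖ := by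
        have := norm_sub_norm_le θ z
        linarith
      have hθz' : ‖θ - z‖ ≤ 3 * b := by
        have := norm_sub_le_norm_sub_add_norm_sub θ y z
        linarith
      rw [hβ, ha3]
      unfold kk
      rw [← ENNReal.ofReal_mul (by positivity), ← ENNReal.ofReal_mul (by positivity),
        ← ENNReal.ofReal_mul (by positivity), ← ENNReal.ofReal_mul (by positivity)]
      apply ENNReal.ofReal_le_ofReal
      have f1 : 1 / ‖x - y‖ ^ q ≤ 2 ^ q * (b + ‖x - y‖) ^ (-q) := by
        rw [Real.rpow_neg (by positivity), ← div_eq_mul_inv, div_le_div_iff₀ (by positivity) (by positivity),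
          one_mul, ← Real.mul_rpow (by positivity) (by positivity)]
        exact Real.rpow_le_rpow (by positivity) (by linarith) hq0.le
      have f2 : 1 ≤ 3 ^ q * b ^ q * (1 / ‖θ - z‖ ^ q) := by
        rw [mul_one_div, one_le_div (by positivity), ← Real.mul_rpow (by positivity) (by positivity)]
        exact Real.rpow_le_rpow (by positivity) hθz' hq0.le
      have f3 : b ^ (q - ((n:ℝ) - 1)) = b ^ q * (b ^ (n - 1))⁻¹ := by
        rw [Real.rpow_sub hb0, div_eq_mul_inv]
        congr 2
        rw [← Real.rpow_natCast, Nat.cast_sub (by omega)]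
        simp
      rw [f3, show (6:ℝ) ^ q = 2 ^ q * 3 ^ q by rw [← Real.mul_rpow (by norm_num) (by norm_num)]; norm_num]
      calc (b ^ (n - 1))⁻¹ * (‖v θ - v z‖ ^ p / ‖x - y‖ ^ q)
          = ((b ^ (n - 1))⁻¹ * ‖v θ - v z‖ ^ p) * (1 / ‖x - y‖ ^ q) * 1 := by ring
        _ ≤ ((b ^ (n - 1))⁻¹ * ‖v θ - v z‖ ^ p) * (2 ^ q * (b + ‖x - y‖) ^ (-q)) *
            (3 ^ q * b ^ q * (1 / ‖θ - z‖ ^ q)) := by gcongr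
        _ = _ := by ring
    calc β * k ≤ β * (ENNReal.ofReal (3 ^ p) * (kk p q (u x - u θ) (x - y) +
          kk p q (u θ - v θ) (x - y) + kk p q (v θ - v z) (x - y))) := by
          rw [hk, e0]
          gcongr
          exact kk_add3 hp _ _ _ _
      _ = ENNReal.ofReal (3 ^ p) * (β * kk p q (u x - u θ) (x - y) +
          kk p q (u θ - v θ) (x - y) * β + β * kk p q (v θ - v z) (x - y)) := by ring
      _ ≤ _ := by
          gcongr ENNReal.ofReal (3 ^ p) * (?_ + ?_ + ?_)
          · grw [e1, e1', ha1, ENNReal.ofReal_mul (by positivity), kk_symm (u x)]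
            apply le_of_eq; ring
          · gcongr
  have hβ1 : β * ENNReal.ofReal (b ^ (n - 1)) = 1 := by
    rw [hβ, ← ENNReal.ofReal_mul (by positivity), inv_mul_cancel₀ (by positivity), ENNReal.ofReal_one]
  have hβΓ : β * nu n Γ ≤ C2 * ENNReal.ofReal (2 ^ (n - 1)) := by
    grw [hΓ, hC2 y (2 * b) (by positivity), mul_pow, ENNReal.ofReal_mul (by positivity)]
    calc _ = C2 * ENNReal.ofReal (2 ^ (n - 1)) * (β * ENNReal.ofReal (b ^ (n - 1))) := by ring
      _ ≤ _ := by rw [hβ1, mul_one]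
  calc k = β * k * ENNReal.ofReal (b ^ (n - 1)) := by
        rw [mul_right_comm, hβ1, one_mul]
    _ ≤ C1 * (β * k * nu n Γ) := by
        grw [hC1 y (by linarith)]
        apply le_of_eq; ring
    _ ≤ C1 * (ENNReal.ofReal (3 ^ p) * (a1 * (∫⁻ θ, kk p q (u θ - u x) (θ - x) *
              ENNReal.ofReal ((‖θ - y‖ ^ (n - 1))⁻¹) ∂(nu n)) +
            a2 * (ENNReal.ofReal (S ^ p) * JJ p q δ (x - y)) +
            a3 * ∫⁻ θ, kk p q (v θ - v z) (θ - z) * (ENNReal.ofReal (b ^ (q - (n - 1))) *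
                ENNReal.ofReal ((b + ‖x - y‖) ^ (-q))) ∂(nu n))) := by
        refine mul_le_mul_right ?_ _
        rw [← setLIntegral_const]
        refine (setLIntegral_mono_ae' hΓm ((nu_ae_norm n).mono fun θ hθ hθΓ => hpt θ hθ hθΓ)).trans ?_
        rw [lintegral_const_mul _ (by fun_prop), lintegral_add_left (by fun_prop),
          lintegral_add_left (by fun_prop), lintegral_const_mul _ (by fun_prop),
          lintegral_const_mul _ (by fun_prop), setLIntegral_const, lintegral_const_mul _ (by fun_prop)]
        refine mul_le_mul_right (add_le_add (add_le_add (mul_le_mul_right ?_ _) ?_) (mul_le_mul_right ?_ _)) _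
        · exact setLIntegral_le_lintegral _ _
        · grw [hβΓ]
          apply le_of_eq; rw [ha2]; ring
        · exact setLIntegral_le_lintegral _ _
    _ ≤ _ := by
        grw [comb3, hK]
        apply le_of_eq; ring

lemma dbl_le3 {n : ℕ} {X Y : Set (Euc n)} (hX : MeasurableSet X) (hY : MeasurableSet Y) {c : ℝ≥0∞}
    {k : Euc n → Euc n → ℝ≥0∞} {f g h : Euc n × Euc n → ℝ≥0∞} (hf : Measurable f)
    (hg : Measurable g) (hh : Measurable h)
    (hk : ∀ x ∈ X, ∀ y ∈ Y, k x y ≤ c * (f (x, y) + g (x, y) + h (x, y))) :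
    ∫⁻ x in X, ∫⁻ y in Y, k x y ≤
      c * ((∫⁻ x in X, ∫⁻ y in Y, f (x, y)) + (∫⁻ x in X, ∫⁻ y in Y, g (x, y)) +
        ∫⁻ x in X, ∫⁻ y in Y, h (x, y)) := by
  refine (setLIntegral_mono' hX (fun x hx => setLIntegral_mono' hY (fun y hy =>
    hk x hx y hy))).trans (le_of_eq ?_)
  have mslice : ∀ {f : Euc n × Euc n → ℝ≥0∞}, Measurable f → ∀ x, Measurable (fun y => f (x, y)) :=
    fun hf x => hf.comp measurable_prodMk_left
  have i1 : Measurable fun x => ∫⁻ y in Y, f (x, y) := hf.lintegral_prod_right'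
  have i2 : Measurable fun x => ∫⁻ y in Y, g (x, y) := hg.lintegral_prod_right'
  have i3 : Measurable fun x => ∫⁻ y in Y, h (x, y) := hh.lintegral_prod_right'
  rw [← lintegral_add_left i1, ← lintegral_add_left (by exact i1.add i2), ← lintegral_const_mul _ (by
    exact (i1.add i2).add i3)]
  apply lintegral_congr
  intro x
  have a1 := mslice hf x
  have a2 := mslice hg x
  have a3 := mslice hh x
  rw [lintegral_const_mul _ (by exact (a1.add a2).add a3), lintegral_add_left (by exact a1.add a2),
    lintegral_add_left a1]

lemma int_JJ {n : ℕ} (hn : 2 ≤ n) {s p : ℝ} (hs : 0 < s) (hs1 : s < 1) (hp : 1 < p) :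
    ∃ C : ℝ≥0, ∀ (δ : ℝ), 0 < δ → ∀ X Y : Set (Euc n), X ⊆ ball 0 2 →
      ∫⁻ x in X, ∫⁻ y in Y, JJ p (n + s * p) δ (x - y) ≤ C * ENNReal.ofReal (δ ^ (-(s * p))) := by
  obtain ⟨C, hC⟩ := J_bound hn hs hs1 hp
  refine ⟨C * (volume (ball (0 : Euc n) 2)).toNNReal, fun δ hδ X Y hX => ?_⟩
  calc _ ≤ ∫⁻ x in X, C * ENNReal.ofReal (δ ^ (-(s * p))) := by
        apply lintegral_mono
        intro x
        exact (setLIntegral_le_lintegral _ _).trans (hC δ hδ x)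
    _ = C * ENNReal.ofReal (δ ^ (-(s * p))) * volume X := by rw [setLIntegral_const]
    _ ≤ C * ENNReal.ofReal (δ ^ (-(s * p))) * volume (ball (0 : Euc n) 2) := by gcongr
    _ = _ := by
        push_cast
        rw [ENNReal.coe_toNNReal measure_ball_lt_top.ne]; ring

lemma int_T1 {n : ℕ} (hn : 2 ≤ n) {s p : ℝ} :
    ∃ C : ℝ≥0, ∀ (M : ℕ) (δ : ℝ), 0 < δ → ∀ u : Euc n → Euc M, Measurable u → ∀ X : Set (Euc n),
      ∫⁻ x in X, ∫⁻ y in ball (0 : Euc n) (1 - δ), ∫⁻ θ, kk p (n + s * p) (u θ - u x) (θ - x) *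
              ENNReal.ofReal ((‖θ - y‖ ^ (n - 1))⁻¹) ∂(nu n) ≤
        C * ∫⁻ θ, (∫⁻ x in X, kk p (n + s * p) (u θ - u x) (θ - x)) ∂(nu n) := by
  obtain ⟨C, hC⟩ := weak_sing hn
  refine ⟨C, fun M δ hδ u hu X => ?_⟩
  rw [lintegral_lintegral_swap (f := fun θ x => kk p (n + s * p) (u θ - u x) (θ - x)) (by fun_prop),
    ← lintegral_const_mul _ (by apply Measurable.lintegral_prod_right; fun_prop)]
  apply lintegral_mono
  intro x
  beta_reduce
  rw [lintegral_lintegral_swap (by fun_prop), ← lintegral_const_mul _ (by fun_prop)]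
  apply lintegral_mono_ae
  filter_upwards [nu_ae_norm n] with θ hθ
  rw [lintegral_const_mul _ (by fun_prop), mul_comm]
  gcongr
  refine (lintegral_mono_set (ball_subset_ball ?_)).trans (hC θ hθ)
  linarith

lemma int_T3 {n : ℕ} (hn : 2 ≤ n) {s p : ℝ} (hs : 0 < s) (hp : 1 < p) :
    ∃ C : ℝ≥0, ∀ (M : ℕ) (δ : ℝ), 0 < δ → δ < 1 / 4 → ∀ v : Euc n → Euc M, Measurable v →
      ∀ X : Set (Euc n),
      ∫⁻ x in X, ∫⁻ y in ball (0 : Euc n) (1 - δ),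
          ∫⁻ θ, kk p (n + s * p) (v θ - v ((1 - δ)⁻¹ • y)) (θ - (1 - δ)⁻¹ • y) *
              (ENNReal.ofReal ((1 - ‖y‖) ^ (n + s * p - (n - 1))) *
                ENNReal.ofReal ((1 - ‖y‖ + ‖x - y‖) ^ (-(n + s * p)))) ∂(nu n) ≤
        C * ∫⁻ θ, (∫⁻ z in ball (0 : Euc n) 1, kk p (n + s * p) (v θ - v z) (θ - z)) ∂(nu n) := by
  have hsp : 0 < s * p := by positivity
  obtain ⟨C, hC⟩ := bracket (volume : Measure (Euc n)) (m := n) (by simp) (q := n + s * p) (by linarith)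
  refine ⟨C, fun M δ hδ hδ1 v hv X => ?_⟩
  rw [lintegral_lintegral_swap (by
    apply Measurable.aemeasurable
    apply Measurable.lintegral_prod_right
    fun_prop)]
  calc _ ≤ ∫⁻ y in ball (0 : Euc n) (1 - δ),
      ∫⁻ θ, C * kk p (n + s * p) (v θ - v ((1 - δ)⁻¹ • y)) (θ - (1 - δ)⁻¹ • y) ∂(nu n) := by
        apply setLIntegral_mono' measurableSet_ball
        intro y hy
        rw [mem_ball_zero_iff] at hy
        rw [lintegral_lintegral_swap (by fun_prop)]
        apply lintegral_mono
        intro θ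
        beta_reduce
        rw [lintegral_const_mul _ (by fun_prop), lintegral_const_mul _ (by fun_prop), mul_comm]
        gcongr
        have h1 : 0 < 1 - ‖y‖ := by linarith
        grw [setLIntegral_le_lintegral, hC (1 - ‖y‖) h1 y, mul_left_comm,
          ← ENNReal.ofReal_mul (by positivity), ← Real.rpow_add h1]
        rw [show (n:ℝ) + s * p - (n - 1) + (n - (n + s * p)) = 1 by ring, Real.rpow_one]
        refine (mul_le_mul_right (ENNReal.ofReal_le_one.2 ?_) _).trans (by rw [mul_one])
        linarith [norm_nonneg y]
    _ = C * ∫⁻ θ, (∫⁻ y in ball (0 : Euc n) (1 - δ),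
        kk p (n + s * p) (v θ - v ((1 - δ)⁻¹ • y)) (θ - (1 - δ)⁻¹ • y)) ∂(nu n) := by
        rw [lintegral_lintegral_swap (by fun_prop), ← lintegral_const_mul _ (by apply Measurable.lintegral_prod_right; fun_prop)]
        apply lintegral_congr
        intro θ
        rw [lintegral_const_mul _ (by fun_prop)]
    _ ≤ _ := by
        refine mul_le_mul_right (lintegral_mono fun θ => ?_) _
        exact scaleI hδ (by linarith) (fun z => kk p (n + s * p) (v θ - v z) (θ - z))

lemma int_EI {n : ℕ} (hn : 2 ≤ n) {s p : ℝ} (hs : 0 < s) (hs1 : s < 1) (hp : 1 < p) :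
    ∃ C : ℝ≥0, ∀ (M : ℕ) (δ S : ℝ), 0 < δ → δ < 1/4 → 0 ≤ S → ∀ u v : Euc n → Euc M,
      Measurable u → Measurable v → (∀ θ, ‖θ‖ = 1 → ‖u θ - v θ‖ ≤ S) →
      ∫⁻ x in ball (0 : Euc n) 2 \ ball 0 1, ∫⁻ y in ball (0 : Euc n) (1 - δ),
        kk p (n + s * p) (u x - v ((1 - δ)⁻¹ • y)) (x - y) ≤
          C * ((∫⁻ θ, (∫⁻ x in ball (0 : Euc n) 2 \ ball 0 1, kk p (n + s * p) (u θ - u x) (θ - x)) ∂(nu n)) +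
            ENNReal.ofReal (S ^ p) * ENNReal.ofReal (δ ^ (-(s * p))) +
            ∫⁻ θ, (∫⁻ z in ball (0 : Euc n) 1, kk p (n + s * p) (v θ - v z) (θ - z)) ∂(nu n)) := by
  obtain ⟨C0, h0⟩ := EI_pt hn hs hp
  obtain ⟨C1, h1⟩ := int_T1 hn (s := s) (p := p)
  obtain ⟨C2, h2⟩ := int_JJ hn hs hs1 hp
  obtain ⟨C3, h3⟩ := int_T3 hn hs hp
  refine ⟨C0 * (C1 + C2 + C3), fun M δ S hδ hδ1 hS u v hu hv hSuv => ?_⟩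
  have hm : MeasurableSet (ball (0 : Euc n) 2 \ ball 0 1) := measurableSet_ball.diff measurableSet_ball
  have mT1 : Measurable (fun z : Euc n × Euc n => ∫⁻ θ, kk p (n + s * p) (u θ - u z.1) (θ - z.1) *
              ENNReal.ofReal ((‖θ - z.2‖ ^ (n - 1))⁻¹) ∂(nu n)) := by
    apply Measurable.lintegral_prod_right; fun_prop
  have mT3 : Measurable (fun z : Euc n × Euc n =>
          ∫⁻ θ, kk p (n + s * p) (v θ - v ((1 - δ)⁻¹ • z.2)) (θ - (1 - δ)⁻¹ • z.2) *
              (ENNReal.ofReal ((1 - ‖z.2‖) ^ (n + s * p - (n - 1))) *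
                ENNReal.ofReal ((1 - ‖z.2‖ + ‖z.1 - z.2‖) ^ (-(n + s * p)))) ∂(nu n)) := by
    apply Measurable.lintegral_prod_right; fun_prop
  have mJ : Measurable (fun z : Euc n × Euc n => ENNReal.ofReal (S ^ p) * JJ p (n + s * p) δ (z.1 - z.2)) := by
    fun_prop
  refine (dbl_le3 hm measurableSet_ball mT1 mJ mT3 (fun x hx y hy =>
    h0 M δ S hδ hδ1 hS u v hu hv hSuv x y (by simpa using hx.2) (by simpa using hy))).trans ?_
  have hJ : ∫⁻ x in ball (0 : Euc n) 2 \ ball 0 1, ∫⁻ y in ball (0 : Euc n) (1 - δ),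
      ENNReal.ofReal (S ^ p) * JJ p (n + s * p) δ (x - y) ≤
        C2 * (ENNReal.ofReal (S ^ p) * ENNReal.ofReal (δ ^ (-(s * p)))) := by
    have : ∀ x : Euc n, ∫⁻ y in ball (0 : Euc n) (1 - δ), ENNReal.ofReal (S ^ p) * JJ p (n + s * p) δ (x - y) =
        ENNReal.ofReal (S ^ p) * ∫⁻ y in ball (0 : Euc n) (1 - δ), JJ p (n + s * p) δ (x - y) :=
      fun x => lintegral_const_mul _ (by fun_prop)
    simp_rw [this]
    rw [lintegral_const_mul _ (by apply Measurable.lintegral_prod_right; fun_prop)]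
    grw [h2 δ hδ _ _ sdiff_subset]
    apply le_of_eq; ring
  grw [h1 M δ hδ u hu, hJ, h3 M δ hδ hδ1 v hv, comb3]
  push_cast
  rw [mul_assoc]

lemma split3 {n : ℕ} {E N I : Set (Euc n)} (hE : MeasurableSet E) (hN : MeasurableSet N) (hI : MeasurableSet I)
    (h1 : Disjoint E (N ∪ I)) (h2 : Disjoint N I) (k : Euc n → Euc n → ℝ≥0∞)
    (hk : Measurable (fun z : Euc n × Euc n => k z.1 z.2)) (hs : ∀ x y, k x y = k y x) :
    ∫⁻ x in E ∪ (N ∪ I), ∫⁻ y in E ∪ (N ∪ I), k x y =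
      (∫⁻ x in E, ∫⁻ y in E, k x y) + ((∫⁻ x in N, ∫⁻ y in N, k x y) + (∫⁻ x in I, ∫⁻ y in I, k x y) +
        2 * ((∫⁻ x in E, ∫⁻ y in N, k x y) + (∫⁻ x in E, ∫⁻ y in I, k x y) +
          (∫⁻ x in N, ∫⁻ y in I, k x y))) := by
  have sym : ∀ X Y : Set (Euc n), ∫⁻ x in X, ∫⁻ y in Y, k x y = ∫⁻ x in Y, ∫⁻ y in X, k x y := by
    intro X Y
    rw [lintegral_lintegral_swap hk.aemeasurable]
    simp_rw [hs]
  have m : ∀ Y : Set (Euc n), Measurable (fun x => ∫⁻ y in Y, k x y) := fun Y =>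
    hk.lintegral_prod_right'
  have sp : ∀ f : Euc n → ℝ≥0∞, ∫⁻ y in E ∪ (N ∪ I), f y =
      (∫⁻ y in E, f y) + ((∫⁻ y in N, f y) + ∫⁻ y in I, f y) := by
    intro f
    rw [lintegral_union (hN.union hI) h1, lintegral_union hI h2]
  have sp2 : ∀ X : Set (Euc n), ∫⁻ x in X, ∫⁻ y in E ∪ (N ∪ I), k x y =
      (∫⁻ x in X, ∫⁻ y in E, k x y) + ((∫⁻ x in X, ∫⁻ y in N, k x y) + ∫⁻ x in X, ∫⁻ y in I, k x y) := by
    intro X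
    simp_rw [sp]
    rw [lintegral_add_left (m E), lintegral_add_left (m N)]
  rw [sp, sp2, sp2, sp2, sym N E, sym I E, sym I N]
  ring

lemma PP_smul_pos {n : ℕ} {c : ℝ} (hc : 0 < c) (x : Euc n) : PP (c • x) = PP x := by
  unfold PP
  rw [norm_smul, Real.norm_of_nonneg hc.le, smul_smul]
  congr 1
  field_simp

/-- structural hypotheses on the glued map, at unit scale -/
structure Glued {n M : ℕ} (δ S : ℝ) (u v w : Euc n → Euc M) (g : Euc n → ℝ) : Prop where
  hu : Measurable u
  hv : Measurable v
  hw : Measurable w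
  hδ : 0 < δ
  hδ1 : δ < 1 / 4
  hS : 0 ≤ S
  hSuv : ∀ θ, ‖θ‖ = 1 → ‖u θ - v θ‖ ≤ S
  wE : ∀ x, 1 ≤ ‖x‖ → w x = u x
  wI : ∀ x, ‖x‖ < 1 - δ → w x = v ((1 - δ)⁻¹ • x)
  wN : ∀ x, 1 - δ ≤ ‖x‖ → ‖x‖ < 1 → w x = (1 - g x) • u (PP x) + g x • v (PP x)
  gE : ∀ x, 1 ≤ ‖x‖ → g x = 0
  gI : ∀ x, ‖x‖ < 1 - δ → g x = 1
  g0 : ∀ x, 0 ≤ g x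
  g1 : ∀ x, g x ≤ 1
  gL : ∀ x y, |g x - g y| ≤ 100 * min 1 (‖x - y‖ / δ)

/-- the right-hand side quantities at unit scale -/
def qA {n M : ℕ} (s p : ℝ) (u : Euc n → Euc M) : ℝ≥0∞ :=
  ∫⁻ θ, (∫⁻ x in ball (0 : Euc n) 2 \ ball 0 1, kk p (n + s * p) (u θ - u x) (θ - x)) ∂(nu n)

/-- inner trace term -/
def qB {n M : ℕ} (s p : ℝ) (v : Euc n → Euc M) : ℝ≥0∞ :=
  ∫⁻ θ, (∫⁻ z in ball (0 : Euc n) 1, kk p (n + s * p) (v θ - v z) (θ - z)) ∂(nu n)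

/-- spherical term -/
def qD {n M : ℕ} (s p : ℝ) (u : Euc n → Euc M) : ℝ≥0∞ :=
  ∫⁻ θ, ∫⁻ ω, kk p (n - 1 + s * p) (u θ - u ω) (θ - ω) ∂(nu n) ∂(nu n)

/-- sup term -/
def qS (s p δ S : ℝ) : ℝ≥0∞ := ENNReal.ofReal (S ^ p) * ENNReal.ofReal (δ ^ (-(s * p)))

lemma int_SJ {n : ℕ} (hn : 2 ≤ n) {s p : ℝ} (hs : 0 < s) (hs1 : s < 1) (hp : 1 < p) :
    ∃ C : ℝ≥0, ∀ (δ S : ℝ), 0 < δ → ∀ X Y : Set (Euc n), X ⊆ ball 0 2 →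
      ∫⁻ x in X, ∫⁻ y in Y, ENNReal.ofReal (S ^ p) * JJ p (n + s * p) δ (x - y) ≤ C * qS s p δ S := by
  obtain ⟨C2, h2⟩ := int_JJ hn hs hs1 hp
  refine ⟨C2, fun δ S hδ X Y hX => ?_⟩
  have : ∀ x : Euc n, ∫⁻ y in Y, ENNReal.ofReal (S ^ p) * JJ p (n + s * p) δ (x - y) =
      ENNReal.ofReal (S ^ p) * ∫⁻ y in Y, JJ p (n + s * p) δ (x - y) :=
    fun x => lintegral_const_mul _ (by fun_prop)
  simp_rw [this]
  rw [lintegral_const_mul _ (by apply Measurable.lintegral_prod_right; fun_prop)]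
  grw [h2 δ hδ _ _ hX]
  apply le_of_eq; unfold qS; ring

lemma annS_sub {n : ℕ} {δ : ℝ} : annS n δ ⊆ ball 0 2 := by
  intro x hx
  rw [mem_annS] at hx
  rw [mem_ball_zero_iff]; linarith

lemma est_EN {n : ℕ} (hn : 2 ≤ n) {s p : ℝ} (hs : 0 < s) (hs1 : s < 1) (hp : 1 < p) :
    ∃ C : ℝ≥0, ∀ (M : ℕ) (δ S : ℝ) (u v w : Euc n → Euc M) (g : Euc n → ℝ), Glued δ S u v w g →
      ∫⁻ x in ball (0 : Euc n) 2 \ ball 0 1, ∫⁻ y in annS n δ, kk p (n + s * p) (w x - w y) (x - y) ≤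
        C * (qA s p u + qS s p δ S) := by
  have hsp : 0 < s * p := by positivity
  have hn' : (2:ℝ) ≤ n := by exact_mod_cast hn
  obtain ⟨C, hC⟩ := int_SJ hn hs hs1 hp
  set q : ℝ := n + s * p with hq
  have hq0 : 0 < q := by positivity
  set K : ℝ≥0∞ := ENNReal.ofReal (3 ^ p) * (ENNReal.ofReal (2 ^ q) + ENNReal.ofReal (100 ^ p)) with hK
  have hKt : K ≠ ⊤ := by rw [hK]; finiteness
  refine ⟨K.toNNReal * (1 + C), fun M δ S u v w g H => ?_⟩
  have hm : MeasurableSet (ball (0 : Euc n) 2 \ ball 0 1) := measurableSet_ball.diff measurableSet_ball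
  have hu := H.hu
  refine (dbl_le3 (c := K) (f := fun z => kk p q (u (PP z.2) - u z.1) (PP z.2 - z.1))
    (g := fun z => ENNReal.ofReal (S ^ p) * JJ p q δ (z.1 - z.2)) (h := fun _ => 0) hm (meas_annS n δ)
    (by fun_prop) (by fun_prop) (by fun_prop) ?_).trans ?_
  · intro x hx y hy
    have hx1 : 1 ≤ ‖x‖ := by simpa using hx.2
    rw [mem_annS] at hy
    have hy0 : 0 < ‖y‖ := by linarith [H.hδ1]
    have e0 : w x - w y = (u x - u (PP y)) + (g y - g x) • (u (PP y) - v (PP y)) := by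
      rw [H.wE x hx1, H.wN y hy.1 hy.2, H.gE x hx1]
      module
    have e1 : kk p q (u x - u (PP y)) (x - y) ≤ ENNReal.ofReal (2 ^ q) * kk p q (u x - u (PP y)) (x - PP y) := by
      apply kk_comp hp hq0 (by norm_num)
      · intro h
        rw [← sub_eq_zero.1 h, sub_self]
      · have := norm_sub_le_norm_sub_add_norm_sub x y (PP y)
        rw [PP_dist hy0, abs_of_pos (by linarith)] at this
        have := norm_sub_norm_le x y
        linarith
    have e2 := kk_cut (q := q) hp H.hS H.hδ (x - y) (H.hSuv (PP y) (norm_PP hy0))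
      (g := g y - g x) (by rw [abs_sub_comm]; exact H.gL x y)
    rw [e0]
    grw [kk_add2 hp, e1, e2, hK, kk_symm (u x), add_zero]
    rw [mul_assoc, add_mul]
    gcongr
    · exact le_self_add
    · exact le_add_self
  · have h1 : ∫⁻ x in ball (0 : Euc n) 2 \ ball 0 1, ∫⁻ y in annS n δ,
        kk p q (u (PP y) - u x) (PP y - x) ≤ qA s p u := by
      rw [lintegral_lintegral_swap (by fun_prop)]
      refine (int_PP hn H.hδ (by linarith [H.hδ1]) (fun θ => ∫⁻ x in ball (0 : Euc n) 2 \ ball 0 1,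
        kk p q (u θ - u x) (θ - x)) (by apply Measurable.lintegral_prod_right; fun_prop)).trans ?_
      refine (mul_le_mul_left (ENNReal.ofReal_le_one.2 (by linarith [H.hδ1])) _).trans ?_
      rw [one_mul]; rfl
    have h2 := hC δ S H.hδ (ball (0 : Euc n) 2 \ ball 0 1) (annS n δ) sdiff_subset
    simp only [lintegral_zero, add_zero]
    grw [h1, h2]
    push_cast
    rw [ENNReal.coe_toNNReal hKt]; clear_value K; rw [mul_assoc K]
    refine mul_le_mul' le_rfl ?_
    rw [add_mul, one_mul, mul_add]
    exact add_le_add le_self_add le_add_self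

lemma est_NI {n : ℕ} (hn : 2 ≤ n) {s p : ℝ} (hs : 0 < s) (hs1 : s < 1) (hp : 1 < p) :
    ∃ C : ℝ≥0, ∀ (M : ℕ) (δ S : ℝ) (u v w : Euc n → Euc M) (g : Euc n → ℝ), Glued δ S u v w g →
      ∫⁻ x in annS n δ, ∫⁻ y in ball (0 : Euc n) (1 - δ), kk p (n + s * p) (w x - w y) (x - y) ≤
        C * (qB s p v + qS s p δ S) := by
  have hsp : 0 < s * p := by positivity
  have hn' : (2:ℝ) ≤ n := by exact_mod_cast hn
  obtain ⟨C, hC⟩ := int_SJ hn hs hs1 hp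
  set q : ℝ := n + s * p with hq
  have hq0 : 0 < q := by positivity
  set K : ℝ≥0∞ := ENNReal.ofReal (3 ^ p) * (ENNReal.ofReal (3 ^ q) + ENNReal.ofReal (100 ^ p)) with hK
  have hKt : K ≠ ⊤ := by rw [hK]; finiteness
  refine ⟨K.toNNReal * (1 + C), fun M δ S u v w g H => ?_⟩
  have hu := H.hu
  have hv := H.hv
  have hc : 0 < (1 - δ)⁻¹ := inv_pos.2 (by linarith [H.hδ1])
  have hc2 : (1 - δ)⁻¹ ≤ 3 / 2 := by
    rw [inv_le_comm₀ (by linarith [H.hδ1]) (by norm_num)]; linarith [H.hδ1]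
  refine (dbl_le3 (c := K) (f := fun z => kk p q (v (PP z.1) - v ((1 - δ)⁻¹ • z.2)) (PP z.1 - (1 - δ)⁻¹ • z.2))
    (g := fun z => ENNReal.ofReal (S ^ p) * JJ p q δ (z.1 - z.2)) (h := fun _ => 0) (meas_annS n δ)
    measurableSet_ball (by fun_prop) (by fun_prop) (by fun_prop) ?_).trans ?_
  · intro x hx y hy
    rw [mem_ball_zero_iff] at hy
    rw [mem_annS] at hx
    have hx0 : 0 < ‖x‖ := by linarith [H.hδ1]
    have e0 : w x - w y = (v (PP x) - v ((1 - δ)⁻¹ • y)) + (g y - g x) • (u (PP x) - v (PP x)) := by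
      rw [H.wI y hy, H.wN x hx.1 hx.2, H.gI y hy]
      module
    have e1 : kk p q (v (PP x) - v ((1 - δ)⁻¹ • y)) (x - y) ≤ ENNReal.ofReal (3 ^ q) *
        kk p q (v (PP x) - v ((1 - δ)⁻¹ • y)) (PP x - (1 - δ)⁻¹ • y) := by
      apply kk_comp hp hq0 (by norm_num)
      · intro h
        rw [sub_eq_zero.1 h, sub_self]
      · have hcx : ‖(1 - δ)⁻¹ • x‖ = (1 - δ)⁻¹ * ‖x‖ := by rw [norm_smul, Real.norm_of_nonneg hc.le]
        have hcy : ‖(1 - δ)⁻¹ • y‖ = (1 - δ)⁻¹ * ‖y‖ := by rw [norm_smul, Real.norm_of_nonneg hc.le]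
        have f1 : ‖(1 - δ)⁻¹ • x - (1 - δ)⁻¹ • y‖ = (1 - δ)⁻¹ * ‖x - y‖ := by
          rw [← smul_sub, norm_smul, Real.norm_of_nonneg hc.le]
        have f2 : 1 ≤ ‖(1 - δ)⁻¹ • x‖ := by
          rw [hcx, ← div_eq_inv_mul, one_le_div (by linarith [H.hδ1])]; exact hx.1
        have f3 : ‖(1 - δ)⁻¹ • y‖ ≤ 1 := by
          rw [hcy, ← div_eq_inv_mul, div_le_one (by linarith [H.hδ1])]; exact hy.le
        have f4 := PP_dist (x := (1 - δ)⁻¹ • x) (by linarith)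
        rw [PP_smul_pos hc, abs_sub_comm, abs_of_nonneg (by linarith)] at f4
        have f5 := norm_sub_le_norm_sub_add_norm_sub (PP x) ((1 - δ)⁻¹ • x) ((1 - δ)⁻¹ • y)
        rw [norm_sub_rev (PP x) ((1 - δ)⁻¹ • x), f4, f1] at f5
        have f6 := norm_sub_norm_le ((1 - δ)⁻¹ • x) ((1 - δ)⁻¹ • y)
        rw [f1] at f6
        have f7 : (1 - δ)⁻¹ * ‖x - y‖ ≤ 3 / 2 * ‖x - y‖ := by gcongr
        linarith
    have e2 := kk_cut (q := q) hp H.hS H.hδ (x - y) (H.hSuv (PP x) (norm_PP hx0))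
      (g := g y - g x) (by rw [abs_sub_comm]; exact H.gL x y)
    rw [e0]
    grw [kk_add2 hp, e1, e2, hK, add_zero]
    rw [mul_assoc, add_mul]
    gcongr
    · exact le_self_add
    · exact le_add_self
  · have h1 : ∫⁻ x in annS n δ, ∫⁻ y in ball (0 : Euc n) (1 - δ),
        kk p q (v (PP x) - v ((1 - δ)⁻¹ • y)) (PP x - (1 - δ)⁻¹ • y) ≤ qB s p v := by
      refine (int_PP hn H.hδ (by linarith [H.hδ1]) (fun θ => ∫⁻ y in ball (0 : Euc n) (1 - δ),
        kk p q (v θ - v ((1 - δ)⁻¹ • y)) (θ - (1 - δ)⁻¹ • y)) (by apply Measurable.lintegral_prod_right; fun_prop)).trans ?_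
      refine (mul_le_mul_left (ENNReal.ofReal_le_one.2 (by linarith [H.hδ1])) _).trans ?_
      rw [one_mul]
      exact lintegral_mono fun θ =>
        scaleI H.hδ (by linarith [H.hδ1]) (fun z => kk p q (v θ - v z) (θ - z))
    have h2 := hC δ S H.hδ (annS n δ) (ball (0 : Euc n) (1 - δ)) annS_sub
    simp only [lintegral_zero, add_zero]
    grw [h1, h2]
    push_cast
    rw [ENNReal.coe_toNNReal hKt]; clear_value K; rw [mul_assoc K]
    refine mul_le_mul' le_rfl ?_
    rw [add_mul, one_mul, mul_add]
    exact add_le_add le_self_add le_add_self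

lemma est_NN {n : ℕ} (hn : 2 ≤ n) {s p : ℝ} (hs : 0 < s) (hs1 : s < 1) (hp : 1 < p) :
    ∃ C : ℝ≥0, ∀ (M : ℕ) (δ S : ℝ) (u v w : Euc n → Euc M) (g : Euc n → ℝ), Glued δ S u v w g →
      ∫⁻ x in annS n δ, ∫⁻ y in annS n δ, kk p (n + s * p) (w x - w y) (x - y) ≤
        C * (ENNReal.ofReal δ * qD s p u + qB s p v + qS s p δ S) := by
  have hsp : 0 < s * p := by positivity
  have hn' : (2:ℝ) ≤ n := by exact_mod_cast hn
  obtain ⟨C, hC⟩ := int_SJ hn hs hs1 hp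
  obtain ⟨C1, hC1⟩ := int_NN hn hs hp
  obtain ⟨C2, hC2⟩ := int_Dv hn hs hp
  set q : ℝ := n + s * p with hq
  have hq0 : 0 < q := by positivity
  set K : ℝ≥0∞ := ENNReal.ofReal (3 ^ p) * (1 + ENNReal.ofReal (100 ^ p)) with hK
  have hKt : K ≠ ⊤ := by rw [hK]; finiteness
  refine ⟨K.toNNReal * (C1 + C1 * C2 + C), fun M δ S u v w g H => ?_⟩
  have hu := H.hu
  have hv := H.hv
  refine (dbl_le3 (c := K) (f := fun z => kk p q (u (PP z.1) - u (PP z.2)) (z.1 - z.2))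
    (g := fun z => kk p q (v (PP z.1) - v (PP z.2)) (z.1 - z.2))
    (h := fun z => ENNReal.ofReal (S ^ p) * JJ p q δ (z.1 - z.2)) (meas_annS n δ)
    (meas_annS n δ) (by fun_prop) (by fun_prop) (by fun_prop) ?_).trans ?_
  · intro x hx y hy
    rw [mem_annS] at hx hy
    have hx0 : 0 < ‖x‖ := by linarith [H.hδ1]
    have e0 : w x - w y = (1 - g y) • (u (PP x) - u (PP y)) + g y • (v (PP x) - v (PP y)) +
        (g y - g x) • (u (PP x) - v (PP x)) := by
      rw [H.wN x hx.1 hx.2, H.wN y hy.1 hy.2]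
      module
    have e1 : kk p q ((1 - g y) • (u (PP x) - u (PP y))) (x - y) ≤ kk p q (u (PP x) - u (PP y)) (x - y) := by
      apply kk_mono hp
      rw [norm_smul, Real.norm_of_nonneg (by linarith [H.g1 y])]
      exact mul_le_of_le_one_left (norm_nonneg _) (by linarith [H.g0 y])
    have e1' : kk p q (g y • (v (PP x) - v (PP y))) (x - y) ≤ kk p q (v (PP x) - v (PP y)) (x - y) := by
      apply kk_mono hp
      rw [norm_smul, Real.norm_of_nonneg (H.g0 y)]
      exact mul_le_of_le_one_left (norm_nonneg _) (H.g1 y)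
    have e2 := kk_cut (q := q) hp H.hS H.hδ (x - y) (H.hSuv (PP x) (norm_PP hx0))
      (g := g y - g x) (by rw [abs_sub_comm]; exact H.gL x y)
    rw [e0]
    grw [kk_add3 hp, e1, e1', e2, hK]
    rw [mul_assoc]
    refine mul_le_mul' le_rfl ?_
    rw [mul_add]
    refine add_le_add (le_mul_of_one_le_left zero_le le_self_add) (mul_le_mul_left le_add_self _)
  · have h2 := hC δ S H.hδ (annS n δ) (annS n δ) annS_sub
    have h3 := hC1 M δ H.hδ H.hδ1 u hu
    have h4 := hC1 M δ H.hδ H.hδ1 v hv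
    grw [hC2 M v hv] at h4
    have h5 : C1 * (ENNReal.ofReal δ * (C2 * qB s p v)) ≤ C1 * C2 * qB s p v := by
      grw [ENNReal.ofReal_le_one.2 (show δ ≤ 1 by linarith [H.hδ1])]
      rw [one_mul, mul_assoc]
    grw [h3, h4.trans h5, h2]
    push_cast
    rw [ENNReal.coe_toNNReal hKt]; clear_value K; rw [mul_assoc K]
    refine mul_le_mul' le_rfl ?_
    exact comb3 _ _ _ _ _ _

lemma est_II {n : ℕ} (hn : 2 ≤ n) {s p : ℝ} (hs : 0 < s) (hp : 1 < p) 
    (M : ℕ) (δ S : ℝ) (u v w : Euc n → Euc M) (g : Euc n → ℝ) (H : Glued δ S u v w g) :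
      ∫⁻ x in ball (0 : Euc n) (1 - δ), ∫⁻ y in ball (0 : Euc n) (1 - δ),
        kk p (n + s * p) (w x - w y) (x - y) ≤
        ENNReal.ofReal (2 ^ (n + s * p)) * gagEnergy n M s p (ball 0 1) v := by
  have hsp : 0 < s * p := by positivity
  have hn' : (2:ℝ) ≤ n := by exact_mod_cast hn
  have hv := H.hv
  have hc : 0 < (1 - δ)⁻¹ := inv_pos.2 (by linarith [H.hδ1])
  have hc2 : (1 - δ)⁻¹ ≤ 2 := by
    rw [inv_le_comm₀ (by linarith [H.hδ1]) (by norm_num)]; linarith [H.hδ1]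
  have key : ∀ x ∈ ball (0 : Euc n) (1 - δ), ∫⁻ y in ball (0 : Euc n) (1 - δ),
        kk p (n + s * p) (w x - w y) (x - y) ≤ ENNReal.ofReal (2 ^ (n + s * p)) *
          ∫⁻ z in ball (0 : Euc n) 1, kk p (n + s * p) (v ((1 - δ)⁻¹ • x) - v z) ((1 - δ)⁻¹ • x - z) := by
    intro x hx
    grw [← scaleI H.hδ (by linarith [H.hδ1]) (fun z => kk p (n + s * p) (v ((1 - δ)⁻¹ • x) - v z) ((1 - δ)⁻¹ • x - z))]
    rw [← lintegral_const_mul _ (by fun_prop)]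
    apply setLIntegral_mono' measurableSet_ball
    intro y hy
    rw [mem_ball_zero_iff] at hx hy
    rw [H.wI x hx, H.wI y hy]
    apply kk_comp hp (by positivity) (by norm_num)
    · intro h; rw [sub_eq_zero.1 h, sub_self]
    · rw [← smul_sub, norm_smul, Real.norm_of_nonneg hc.le]
      gcongr
  refine (setLIntegral_mono' measurableSet_ball key).trans ?_
  rw [lintegral_const_mul _ (by apply Measurable.lintegral_prod_right; fun_prop)]
  refine mul_le_mul_right ?_ _
  exact scaleI H.hδ (by linarith [H.hδ1]) (fun x => ∫⁻ z in ball (0 : Euc n) 1, kk p (n + s * p) (v x - v z) (x - z))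

theorem unit_est {n : ℕ} (hn : 2 ≤ n) {s p : ℝ} (hs : 0 < s) (hs1 : s < 1) (hp : 1 < p) :
    ∃ C : ℝ≥0, ∀ (M : ℕ) (δ S : ℝ) (u v w : Euc n → Euc M) (g : Euc n → ℝ), Glued δ S u v w g →
      gagEnergy n M s p (ball 0 2) w ≤ gagEnergy n M s p (ball 0 2 \ ball 0 1) u +
        C * (gagEnergy n M s p (ball 0 1) v + (qA s p u + qB s p v) + ENNReal.ofReal δ * qD s p u +
          qS s p δ S) := by
  obtain ⟨C1, h1⟩ := est_EN hn hs hs1 hp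
  obtain ⟨C2, h2⟩ := est_NI hn hs hs1 hp
  obtain ⟨C3, h3⟩ := est_NN hn hs hs1 hp
  obtain ⟨C4, h4⟩ := int_EI hn hs hs1 hp
  refine ⟨C3 + Real.toNNReal (2 ^ (n + s * p)) + 2 * (C1 + C4 + C2), fun M δ S u v w g H => ?_⟩
  have hw := H.hw
  have h5 := est_II hn hs hp M δ S u v w g H
  have hm : MeasurableSet (ball (0 : Euc n) 2 \ ball 0 1) := measurableSet_ball.diff measurableSet_ball
  have hsplit : ball (0 : Euc n) 2 = (ball 0 2 \ ball 0 1) ∪ (annS n δ ∪ ball 0 (1 - δ)) := by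
    ext x
    simp only [mem_union, mem_sdiff, mem_ball_zero_iff, mem_annS]
    have := H.hδ
    constructor
    · intro h
      by_cases h1 : ‖x‖ < 1
      · by_cases h2 : ‖x‖ < 1 - δ
        · exact Or.inr (Or.inr h2)
        · exact Or.inr (Or.inl ⟨not_lt.1 h2, h1⟩)
      · exact Or.inl ⟨h, h1⟩
    · rintro (h | h | h)
      · exact h.1
      · linarith [h.2]
      · linarith
  have hd1 : Disjoint (ball (0 : Euc n) 2 \ ball 0 1) (annS n δ ∪ ball 0 (1 - δ)) := by
    rw [Set.disjoint_left]
    intro x hx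
    simp only [mem_union, mem_sdiff, mem_ball_zero_iff, mem_annS] at hx ⊢
    have := H.hδ
    rintro (h | h)
    · exact hx.2 h.2
    · exact hx.2 (by linarith)
  have hd2 : Disjoint (annS n δ) (ball 0 (1 - δ)) := by
    rw [Set.disjoint_left]
    intro x hx
    simp only [mem_ball_zero_iff, mem_annS] at hx ⊢
    linarith
  have hEE : ∫⁻ x in ball (0 : Euc n) 2 \ ball 0 1, ∫⁻ y in ball (0 : Euc n) 2 \ ball 0 1,
      kk p (n + s * p) (w x - w y) (x - y) = gagEnergy n M s p (ball 0 2 \ ball 0 1) u := by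
    apply setLIntegral_congr_fun hm
    intro x hx
    apply setLIntegral_congr_fun hm
    intro y hy
    beta_reduce
    rw [H.wE x (by simpa using hx.2), H.wE y (by simpa using hy.2)]
    rfl
  have hEI : ∫⁻ x in ball (0 : Euc n) 2 \ ball 0 1, ∫⁻ y in ball (0 : Euc n) (1 - δ),
      kk p (n + s * p) (w x - w y) (x - y) ≤ C4 * (qA s p u + qS s p δ S + qB s p v) := by
    refine le_trans (le_of_eq ?_) (h4 M δ S H.hδ H.hδ1 H.hS u v H.hu H.hv H.hSuv)
    apply setLIntegral_congr_fun hm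
    intro x hx
    apply setLIntegral_congr_fun measurableSet_ball
    intro y hy
    beta_reduce
    rw [H.wE x (by simpa using hx.2), H.wI y (by simpa using hy)]
  have h0 : gagEnergy n M s p (ball 0 2) w =
      ∫⁻ x in ball (0 : Euc n) 2, ∫⁻ y in ball (0 : Euc n) 2, kk p (n + s * p) (w x - w y) (x - y) := rfl
  rw [h0, hsplit, split3 hm (meas_annS n δ) measurableSet_ball hd1 hd2 _ (by fun_prop)
    (fun x y => kk_symm _ _ _ _), ← hsplit, hEE]
  grw [h1 M δ S u v w g H, h2 M δ S u v w g H, h3 M δ S u v w g H, hEI, h5]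
  generalize gagEnergy n M s p (ball 0 1) v = G
  generalize qA s p u = A
  generalize qB s p v = B
  generalize ENNReal.ofReal δ * qD s p u = D
  generalize qS s p δ S = T
  set Q := G + (A + B) + D + T with hQ
  have b1 : A + T ≤ Q := by
    rw [hQ, show G + (A + B) + D + T = (A + T) + (G + B + D) by ring]; exact le_self_add
  have b2 : A + T + B ≤ Q := by
    rw [hQ, show G + (A + B) + D + T = (A + T + B) + (G + D) by ring]; exact le_self_add
  have b3 : B + T ≤ Q := by
    rw [hQ, show G + (A + B) + D + T = (B + T) + (G + A + D) by ring]; exact le_self_add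
  have b4 : D + B + T ≤ Q := by
    rw [hQ, show G + (A + B) + D + T = (D + B + T) + (G + A) by ring]; exact le_self_add
  have b5 : G ≤ Q := by
    rw [hQ, add_assoc, add_assoc]; exact le_self_add
  grw [b2, b1, b4, b3, b5]
  push_cast
  rw [← ENNReal.ofReal]
  apply le_of_eq; ring

lemma map_smul_hausdorff {n : ℕ} (d : ℝ) (hd : 0 ≤ d) {r : ℝ} (hr : 0 < r) :
    (Measure.hausdorffMeasure d : Measure (Euc n)).map (fun x => r • x) =
      ENNReal.ofReal (r ^ (-d)) • (Measure.hausdorffMeasure d : Measure (Euc n)) := by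
  ext A hA
  have hemb : MeasurableEmbedding (fun x : Euc n => r • x) :=
    (Homeomorph.smulOfNeZero r hr.ne').measurableEmbedding
  rw [hemb.map_apply, preimage_smul₀ hr.ne', Measure.hausdorffMeasure_smul₀ hd (inv_ne_zero hr.ne')]
  rw [Measure.smul_apply, smul_eq_mul, ENNReal.smul_def, smul_eq_mul]
  congr 1
  rw [ENNReal.ofReal]
  congr 1
  ext
  rw [Real.coe_toNNReal _ (by positivity), NNReal.coe_rpow, coe_nnnorm, Real.norm_of_nonneg (by positivity),
    Real.inv_rpow hr.le, Real.rpow_neg hr.le]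

lemma nu_scale {n : ℕ} (hn : 2 ≤ n) : ∃ C : ℝ≥0, ∀ (r : ℝ), 0 < r → ∀ f : Euc n → ℝ≥0∞,
    ∫⁻ θ, f (r • θ) ∂(nu n) ≤ C * ENNReal.ofReal (r ^ (-((n : ℝ) - 1))) *
      ∫⁻ θ in sphere (0 : Euc n) r, f θ ∂μH[(n : ℝ) - 1] := by
  obtain ⟨C, hC⟩ := nu_le_hausdorff hn
  have hn' : (2:ℝ) ≤ n := by exact_mod_cast hn
  refine ⟨C, fun r hr f => ?_⟩
  refine (lintegral_mono' hC le_rfl).trans ?_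
  rw [lintegral_smul_measure, smul_eq_mul, mul_assoc]
  refine mul_le_mul' le_rfl (le_of_eq ?_)
  have hemb : MeasurableEmbedding (fun x : Euc n => r • x) :=
    (Homeomorph.smulOfNeZero r hr.ne').measurableEmbedding
  have hpre : sphere (0 : Euc n) 1 = (fun x : Euc n => r • x) ⁻¹' (sphere 0 r) := by
    ext x
    simp [norm_smul, abs_of_pos hr, hr.ne']
  rw [hpre, ← hemb.lintegral_map, ← hemb.restrict_map, map_smul_hausdorff _ (by linarith) hr,
    Measure.restrict_smul, lintegral_smul_measure, smul_eq_mul]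

lemma kk_scale {m n : ℕ} {p q r : ℝ} (hr : 0 < r) (a : Euc m) (x y : Euc n) :
    kk p q a (x - y) = ENNReal.ofReal (r ^ q) * kk p q a (r • x - r • y) := by
  unfold kk
  rw [← smul_sub, norm_smul, Real.norm_of_nonneg hr.le, ← ENNReal.ofReal_mul (by positivity),
    Real.mul_rpow hr.le (norm_nonneg _)]
  congr 1
  have : r ^ q ≠ 0 := by positivity
  rw [div_eq_mul_inv, div_eq_mul_inv, mul_inv]
  field_simp

lemma vol_scale {n : ℕ} {r : ℝ} (hr : 0 < r) (A : Set (Euc n)) (f : Euc n → ℝ≥0∞) :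
    ∫⁻ x in (fun x => r • x) ⁻¹' A, f (r • x) = ENNReal.ofReal (r ^ (-(n : ℝ))) * ∫⁻ x in A, f x := by
  rw [lint_smul_set volume hr A f, ← mul_assoc, ← ENNReal.ofReal_mul (by positivity)]
  rw [finrank_euclideanSpace, Fintype.card_fin, ← Real.rpow_natCast, ← Real.rpow_add hr]
  simp

lemma pre_ball {n : ℕ} {r a : ℝ} (hr : 0 < r) :
    (fun x : Euc n => r • x) ⁻¹' (ball 0 (a * r)) = ball 0 a := by
  ext x
  simp only [mem_preimage, mem_ball_zero_iff, norm_smul, Real.norm_of_nonneg hr.le]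
  rw [mul_comm, mul_lt_mul_iff_left₀ hr]

lemma pre_ball1 {n : ℕ} {r : ℝ} (hr : 0 < r) :
    (fun x : Euc n => r • x) ⁻¹' (ball 0 r) = ball 0 1 := by
  simpa using pre_ball (n := n) (a := 1) hr

lemma pre_diff {n : ℕ} {r : ℝ} (hr : 0 < r) :
    (fun x : Euc n => r • x) ⁻¹' (ball 0 (2 * r) \ ball 0 r) = ball 0 2 \ ball 0 1 := by
  rw [preimage_sdiff, pre_ball hr, pre_ball1 hr]

lemma inner_scale {n M : ℕ} {p q r : ℝ} (hr : 0 < r) (A : Set (Euc n)) (f : Euc n → Euc M) (hf : Measurable f)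
    (a : Euc M) (θ : Euc n) :
    ∫⁻ x in (fun x => r • x) ⁻¹' A, kk p q (a - f (r • x)) (θ - x) =
      ENNReal.ofReal (r ^ (q - n)) * ∫⁻ x in A, kk p q (a - f x) (r • θ - x) := by
  simp_rw [kk_scale (p := p) (q := q) hr _ θ]
  rw [lintegral_const_mul _ (by fun_prop), vol_scale hr A (fun x => kk p q (a - f x) (r • θ - x)), ← mul_assoc,
    ← ENNReal.ofReal_mul (by positivity), ← Real.rpow_add hr]
  rfl

lemma gag_scale {n M : ℕ} {s p r : ℝ} (hr : 0 < r) (A : Set (Euc n)) (f : Euc n → Euc M) (hf : Measurable f) :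
    gagEnergy n M s p A f = ENNReal.ofReal (r ^ ((n : ℝ) - s * p)) *
      gagEnergy n M s p ((fun x => r • x) ⁻¹' A) (fun x => f (r • x)) := by
  have h : gagEnergy n M s p ((fun x => r • x) ⁻¹' A) (fun x => f (r • x)) =
    ∫⁻ x in ((fun x => r • x) ⁻¹' A), ∫⁻ y in ((fun x => r • x) ⁻¹' A),
      kk p (n + s * p) (f (r • x) - f (r • y)) (x - y) := rfl
  rw [h]
  simp_rw [inner_scale (p := p) (q := n + s * p) hr A f hf]
  rw [lintegral_const_mul _ (by
      apply Measurable.lintegral_prod_right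
      fun_prop),
    vol_scale hr A (fun x => ∫⁻ y in A, kk p (n + s * p) (f x - f y) (x - y)), ← mul_assoc, ← mul_assoc,
    ← ENNReal.ofReal_mul (by positivity), ← ENNReal.ofReal_mul (by positivity), ← Real.rpow_add hr,
    ← Real.rpow_add hr]
  rw [show (n:ℝ) - s * p + (n + s * p - n) + -n = 0 by ring]
  simp; rfl

lemma q_scale {n : ℕ} (hn : 2 ≤ n) (s p : ℝ) : ∃ C : ℝ≥0, ∀ (M : ℕ) (r : ℝ), 0 < r →
    ∀ f : Euc n → Euc M, Measurable f → ∀ A : Set (Euc n),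
    ENNReal.ofReal (r ^ ((n : ℝ) - s * p)) * ∫⁻ θ, (∫⁻ x in (fun x => r • x) ⁻¹' A,
      kk p (n + s * p) (f (r • θ) - f (r • x)) (θ - x)) ∂(nu n) ≤
      C * (ENNReal.ofReal r * ∫⁻ θ in sphere (0 : Euc n) r, (∫⁻ y in A,
        ENNReal.ofReal (‖f θ - f y‖ ^ p / ‖θ - y‖ ^ ((n : ℝ) + s * p))) ∂μH[(n : ℝ) - 1]) := by
  obtain ⟨C, hC⟩ := nu_scale hn
  refine ⟨C, fun M r hr f hf A => ?_⟩
  simp_rw [inner_scale (p := p) (q := n + s * p) hr A f hf]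
  rw [lintegral_const_mul _ (by
      apply Measurable.lintegral_prod_right
      fun_prop)]
  refine (mul_le_mul' le_rfl (mul_le_mul' le_rfl (hC r hr (fun θ => ∫⁻ x in A, kk p (n + s * p) (f θ - f x) (θ - x))))).trans ?_
  unfold kk
  generalize (∫⁻ θ in sphere (0 : Euc n) r, (∫⁻ y in A,
        ENNReal.ofReal (‖f θ - f y‖ ^ p / ‖θ - y‖ ^ ((n : ℝ) + s * p))) ∂μH[(n : ℝ) - 1]) = I
  have : ENNReal.ofReal (r ^ ((n : ℝ) - s * p)) * (ENNReal.ofReal (r ^ ((n : ℝ) + s * p - n)) *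
     ENNReal.ofReal (r ^ (-((n : ℝ) - 1)))) = ENNReal.ofReal r := by
    rw [← ENNReal.ofReal_mul (by positivity), ← ENNReal.ofReal_mul (by positivity), ← Real.rpow_add hr,
      ← Real.rpow_add hr]
    rw [show ((n : ℝ) - s * p + (n + s * p - n + -((n:ℝ) - 1))) = 1 by ring, Real.rpow_one]
  rw [← this]
  apply le_of_eq; ring

lemma qD_scale {n : ℕ} (hn : 2 ≤ n) (s p : ℝ) : ∃ C : ℝ≥0, ∀ (M : ℕ) (r : ℝ), 0 < r →
    ∀ f : Euc n → Euc M, Measurable f → 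
    ENNReal.ofReal (r ^ ((n : ℝ) - s * p)) * qD s p (fun x => f (r • x)) ≤
      C * (ENNReal.ofReal r * ∫⁻ θ in sphere (0 : Euc n) r, ∫⁻ ω in sphere (0 : Euc n) r,
        ENNReal.ofReal (‖f θ - f ω‖ ^ p / ‖θ - ω‖ ^ ((n : ℝ) - 1 + s * p))
        ∂μH[(n : ℝ) - 1] ∂μH[(n : ℝ) - 1]) := by
  obtain ⟨C, hC⟩ := nu_scale hn
  refine ⟨C * C, fun M r hr f hf => ?_⟩
  unfold qD
  have h1 : ∀ θ : Euc n, ∫⁻ ω, 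
      kk p (n - 1 + s * p) (f (r • θ) - f (r • ω)) (θ - ω) ∂(nu n) = 
      ENNReal.ofReal (r ^ ((n : ℝ) - 1 + s * p)) * ∫⁻ ω, 
      kk p (n - 1 + s * p) (f (r • θ) - f (r • ω)) (r • θ - r • ω) ∂(nu n) := by
    intro θ
    rw [← lintegral_const_mul _ (by fun_prop)]
    exact lintegral_congr fun ω => kk_scale hr _ _ _
  simp_rw [h1]
  rw [lintegral_const_mul _ (by apply Measurable.lintegral_prod_right; fun_prop)]
  have h2 := hC r hr (fun θ => ∫⁻ ω, kk p (n - 1 + s * p) (f θ - f (r • ω)) (θ - r • ω) ∂(nu n))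
  have h3 : ∀ θ, ∫⁻ ω, kk p (n - 1 + s * p) (f θ - f (r • ω)) (θ - r • ω) ∂(nu n) ≤ _ := fun θ =>
    hC r hr (fun ω => kk p (n - 1 + s * p) (f θ - f ω) (θ - ω))
  have h4 := h2.trans (mul_le_mul' le_rfl (lintegral_mono h3))
  rw [lintegral_const_mul' _ _ (by finiteness)] at h4
  refine (mul_le_mul' le_rfl (mul_le_mul' le_rfl h4)).trans ?_
  unfold kk
  generalize (∫⁻ θ in sphere (0 : Euc n) r, ∫⁻ ω in sphere (0 : Euc n) r,
        ENNReal.ofReal (‖f θ - f ω‖ ^ p / ‖θ - ω‖ ^ ((n : ℝ) - 1 + s * p))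
        ∂μH[(n : ℝ) - 1] ∂μH[(n : ℝ) - 1]) = I
  have : ENNReal.ofReal (r ^ ((n : ℝ) - s * p)) * (ENNReal.ofReal (r ^ ((n : ℝ) - 1 + s * p)) *
     (ENNReal.ofReal (r ^ (-((n : ℝ) - 1))) * ENNReal.ofReal (r ^ (-((n : ℝ) - 1))))) = ENNReal.ofReal r := by
    rw [← ENNReal.ofReal_mul (by positivity), ← ENNReal.ofReal_mul (by positivity),
      ← ENNReal.ofReal_mul (by positivity), ← Real.rpow_add hr,
      ← Real.rpow_add hr, ← Real.rpow_add hr]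
    rw [show ((n : ℝ) - s * p + (n - 1 + s * p + (-((n:ℝ) - 1) + -((n:ℝ) - 1)))) = 1 by ring, Real.rpow_one]
  rw [← this]
  push_cast
  apply le_of_eq; ring

lemma eta_lip {η : ℝ → ℝ} {K : ℝ} (h : ContDiff ℝ (⊤ : ℕ∞) η) (hd : ∀ x, |deriv η x| ≤ K) (a b : ℝ) :
    |η a - η b| ≤ K * |a - b| := by
  have := Convex.norm_image_sub_le_of_norm_deriv_le (𝕜 := ℝ) (f := η) (s := univ) (C := K)
    (fun x _ => (h.differentiable (by simp)).differentiableAt) (fun x _ => hd x) convex_univ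
    (mem_univ b) (mem_univ a)
  simpa using this

lemma glue_meas {n M : ℕ} {r δ : ℝ} {η : ℝ → ℝ} (hη : Measurable η) {u v : Euc n → Euc M} (hu : Measurable u)
    (hv : Measurable v) : Measurable (glue n M r δ η u v) := by
  unfold glue
  refine Measurable.ite (measurableSet_le measurable_const measurable_norm) hu ?_
  refine Measurable.ite (measurableSet_le measurable_norm measurable_const) (by fun_prop) ?_
  have : Measurable (fun x : Euc n => (r / ‖x‖) • x) := by fun_prop
  exact ((measurable_const.sub (hη.comp measurable_norm)).smul (hu.comp this)).add
    ((hη.comp measurable_norm).smul (hv.comp this))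

lemma mk_glued {n M : ℕ} {r δ S : ℝ} (hr : 0 < r) (hδ : 0 < δ) (hδ1 : δ < 1 / 4) {u v : Euc n → Euc M}
    (hu : Measurable u) (hv : Measurable v) {η : ℝ → ℝ} (hη : ContDiff ℝ (⊤ : ℕ∞) η)
    (hI : ∀ x, η x ∈ Set.Icc (0 : ℝ) 1)
    (h1 : ∀ x : ℝ, 0 ≤ x → x ≤ (1 - 3 * δ / 4) * r → η x = 1)
    (h0 : ∀ x : ℝ, (1 - δ / 2) * r ≤ x → η x = 0)
    (hd : ∀ x : ℝ, |deriv η x| ≤ 100 / (δ * r)) (hS : 0 ≤ S)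
    (hSuv : ∀ θ : Euc n, ‖θ‖ = r → ‖u θ - v θ‖ ≤ S) :
    Glued δ S (fun x => u (r • x)) (fun x => v (r • x)) (fun x => glue n M r δ η u v (r • x))
      (fun x : Euc n => η (r * ‖x‖)) where
  hu := by fun_prop
  hv := by fun_prop
  hw := (glue_meas hη.continuous.measurable hu hv).comp (measurable_const_smul r)
  hδ := hδ
  hδ1 := hδ1
  hS := hS
  hSuv := fun θ h => hSuv _ (by rw [norm_smul, h, Real.norm_of_nonneg hr.le, mul_one])
  wE := fun x hx => by
    have : r ≤ ‖r • x‖ := by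
      rw [norm_smul, Real.norm_of_nonneg hr.le]; exact le_mul_of_one_le_right hr.le hx
    simp only [glue]
    rw [if_pos this]
  wI := fun x hx => by
    have e : ‖r • x‖ = r * ‖x‖ := by rw [norm_smul, Real.norm_of_nonneg hr.le]
    simp only [glue]
    rw [if_neg (by rw [e]; nlinarith), if_pos (by rw [e]; nlinarith)]
    rw [smul_comm]
  wN := fun x hx hx1 => by
    have e : ‖r • x‖ = r * ‖x‖ := by rw [norm_smul, Real.norm_of_nonneg hr.le]
    have hx0 : 0 < ‖x‖ := by linarith
    have e2 : (r / (r * ‖x‖)) • r • x = r • PP x := by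
      unfold PP
      rw [smul_smul, smul_smul]; congr 1; field_simp
    simp only [glue]
    rw [if_neg (by rw [e]; nlinarith)]
    rcases hx.lt_or_eq with h | h
    · rw [if_neg (by rw [e]; nlinarith), e, e2]
    · rw [if_pos (by rw [e]; nlinarith), h1 (r * ‖x‖) (by positivity) (by nlinarith)]
      have e3 : (1 - δ)⁻¹ • r • x = r • PP x := by
        unfold PP
        rw [smul_smul, smul_smul, h]; congr 1; field_simp
      rw [e3]; simp
  gE := fun x hx => h0 _ (by nlinarith [norm_nonneg x])
  gI := fun x hx => h1 _ (by positivity) (by nlinarith [norm_nonneg x])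
  g0 := fun x => (hI _).1
  g1 := fun x => (hI _).2
  gL := fun x y => by
    have l1 := eta_lip hη hd (r * ‖x‖) (r * ‖y‖)
    have l2 : |r * ‖x‖ - r * ‖y‖| ≤ r * ‖x - y‖ := by
      rw [← mul_sub, abs_mul, abs_of_pos hr]
      exact mul_le_mul_of_nonneg_left (abs_norm_sub_norm_le x y) hr.le
    have l3 : |η (r * ‖x‖) - η (r * ‖y‖)| ≤ 100 * (‖x - y‖ / δ) := by
      calc _ ≤ 100 / (δ * r) * (r * ‖x - y‖) := by grw [l1, l2]
        _ = _ := by field_simp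
    have l4 : |η (r * ‖x‖) - η (r * ‖y‖)| ≤ 100 * 1 := by
      have a := hI (r * ‖x‖)
      have b := hI (r * ‖y‖)
      rw [abs_le]; constructor <;> linarith [a.1, a.2, b.1, b.2]
    rcases min_choice 1 (‖x - y‖ / δ) with h | h <;> simp only [h] <;> assumption

/-- the kernel is not integrable up to the sphere -/
lemma inner_inf {n : ℕ} {s p : ℝ} (hs : 0 < s) (hp : 1 < p) {c : ℝ} (hc : 0 < c) {θ : Euc n} (hθ : ‖θ‖ = 1) :
    ∫⁻ z in ball (0 : Euc n) 1, ENNReal.ofReal (c / ‖θ - z‖ ^ (n + s * p)) = ⊤ := by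
  have hsp : 0 < s * p := by positivity
  set V := (volume (ball (0 : Euc n) 1)) with hV
  have hV0 : V ≠ 0 := (measure_ball_pos _ _ one_pos).ne'
  have hVt : V ≠ ⊤ := measure_ball_lt_top.ne
  set V' := V.toReal
  have hV' : 0 < V' := ENNReal.toReal_pos hV0 hVt
  have key : ∀ t : ℝ, 0 < t → t < 1 → ENNReal.ofReal (c / 2 ^ (n + s * p) * V' * t ^ (-(s * p))) ≤
      ∫⁻ z in ball (0 : Euc n) 1, ENNReal.ofReal (c / ‖θ - z‖ ^ (n + s * p)) := by
    intro t ht ht1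
    have hn1 : ‖(1 - t) • θ‖ = 1 - t := by
      rw [norm_smul, hθ, Real.norm_of_nonneg (by linarith), mul_one]
    have hn2 : ‖θ - (1 - t) • θ‖ = t := by
      rw [show θ - (1 - t) • θ = t • θ by module, norm_smul, hθ, Real.norm_of_nonneg ht.le, mul_one]
    have hsub : ball ((1 - t) • θ) t ⊆ ball (0 : Euc n) 1 := by
      apply ball_subset_ball'
      rw [dist_zero_right, hn1]; linarith
    calc _ = ∫⁻ z in ball ((1 - t) • θ) t, ENNReal.ofReal (c / (2 * t) ^ (n + s * p)) := by
          rw [setLIntegral_const, vol_ball _ ht, ← hV, ← ENNReal.ofReal_toReal hVt,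
            ← ENNReal.ofReal_mul (by positivity), ← ENNReal.ofReal_mul (by positivity)]
          congr 1
          rw [Real.mul_rpow (by norm_num) ht.le, Real.rpow_add ht, Real.rpow_neg ht.le, Real.rpow_natCast]
          have : t ^ (s * p) ≠ 0 := by positivity
          have : (2:ℝ) ^ (n + s * p) ≠ 0 := by positivity
          field_simp
          rfl
      _ ≤ ∫⁻ z in ball ((1 - t) • θ) t, ENNReal.ofReal (c / ‖θ - z‖ ^ (n + s * p)) := by
          apply setLIntegral_mono' measurableSet_ball
          intro z hz
          have hzz := hsub hz
          rw [mem_ball_zero_iff] at hzz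
          rw [mem_ball, dist_eq_norm] at hz
          have h1 : 0 < ‖θ - z‖ := by linarith [norm_sub_norm_le θ z]
          have h2 : ‖θ - z‖ ≤ 2 * t := by
            have := norm_sub_le_norm_sub_add_norm_sub θ ((1 - t) • θ) z
            rw [hn2, norm_sub_rev ((1 - t) • θ) z] at this
            linarith
          apply ENNReal.ofReal_le_ofReal
          gcongr
      _ ≤ _ := lintegral_mono_set hsub
  by_contra hI
  set I := ∫⁻ z in ball (0 : Euc n) 1, ENNReal.ofReal (c / ‖θ - z‖ ^ (n + s * p)) with hIdef
  have hc' : 0 < c / 2 ^ (n + s * p) * V' := by positivity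
  have ht := (tendsto_rpow_neg_nhdsGT_zero (neg_lt_zero.2 hsp)).eventually_gt_atTop (I.toReal / (c / 2 ^ (n + s * p) * V'))
  have h2 : ∀ᶠ t in nhdsWithin (0:ℝ) (Ioi 0), t ∈ Ioo (0:ℝ) 1 := Ioo_mem_nhdsGT one_pos
  obtain ⟨t, h3, h4⟩ := (ht.and h2).exists
  rw [div_lt_iff₀' hc'] at h3
  have := key t h4.1 h4.2
  rw [← ENNReal.ofReal_toReal hI, ENNReal.ofReal_le_ofReal_iff ENNReal.toReal_nonneg] at this
  linarith

lemma trace_closure {n M : ℕ} (hn : 2 ≤ n) {s p : ℝ} (hs : 0 < s) (hp : 1 < p) {v : Euc n → Euc M}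
    (hv : Measurable v) (hc : ContinuousOn v (sphere 0 1)) (hB : qB s p v < ⊤) {θ₀ : Euc n} (h0 : ‖θ₀‖ = 1) :
    v θ₀ ∈ closure (v '' ball 0 1) := by
  rw [Metric.mem_closure_iff]
  by_contra! hcon
  obtain ⟨ε, hε, hfar⟩ := hcon
  have hfar : ∀ y ∈ ball (0 : Euc n) 1, ε ≤ dist (v θ₀) (v y) := fun y hy => hfar _ (mem_image_of_mem v hy)
  obtain ⟨b, hb, hcl⟩ := (Metric.continuousOn_iff.1 hc) θ₀ (by simpa using h0) (ε / 2) (by positivity)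
  have hae : ∀ᵐ θ ∂(nu n), (∫⁻ z in ball (0 : Euc n) 1, kk p (n + s * p) (v θ - v z) (θ - z)) < ⊤ :=
    ae_lt_top (by apply Measurable.lintegral_prod_right; fun_prop) hB.ne
  have hcap := cap_pos hn θ₀ h0 hb
  obtain ⟨θ, ht1, ht2, ht3⟩ : ∃ θ, ‖θ - θ₀‖ < b ∧ ‖θ‖ = 1 ∧
      (∫⁻ z in ball (0 : Euc n) 1, kk p (n + s * p) (v θ - v z) (θ - z)) < ⊤ := by
    by_contra! hno
    apply hcap
    have := (nu_ae_norm n).and hae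
    rw [← nonpos_iff_eq_zero]
    refine le_trans (measure_mono ?_) (le_of_eq (ae_iff.1 this))
    intro θ hθ
    simp only [mem_ofPred_eq] at hθ ⊢
    rintro ⟨k1, k2⟩
    exact absurd k2 (not_lt.2 (hno θ hθ k1))
  have hinf := inner_inf (n := n) hs hp (c := (ε / 2) ^ p) (by positivity) ht2
  rw [← not_le] at ht3
  apply ht3
  rw [← hinf]
  apply setLIntegral_mono' measurableSet_ball
  intro z hz
  apply ENNReal.ofReal_le_ofReal
  have h1 := hcl θ (by simpa using ht2) (by rwa [dist_eq_norm])
  have h2 := hfar z hz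
  have h3 := dist_triangle_left (v θ₀) (v z) (v θ)
  rw [← dist_eq_norm]
  have : ε / 2 ≤ dist (v θ) (v z) := by linarith
  exact div_le_div_of_nonneg_right (Real.rpow_le_rpow (by positivity) this (by linarith)) (by positivity)

lemma part_i {n M : ℕ} {r δ S : ℝ} (hr : 0 < r) (hδ1 : δ < 1 / 4)
    {u v : Euc n → Euc M} {η : ℝ → ℝ} (hI : ∀ x, η x ∈ Set.Icc (0 : ℝ) 1) (hS : 0 ≤ S)
    (hSuv : ∀ θ : Euc n, ‖θ‖ = r → ‖u θ - v θ‖ ≤ S)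
    (hcl : ∀ θ : Euc n, ‖θ‖ = r → v θ ∈ closure (v '' ball 0 r)) {R : ℝ} (hR : r ≤ R) {x : Euc n}
    (hx : x ∈ ball 0 R) (hδ : 0 < δ) :
    infDist (glue n M r δ η u v x) (u '' ball 0 R ∪ v '' ball 0 R) ≤ S := by
  set T := u '' ball 0 R ∪ v '' ball 0 R with hT
  have hcl' : ∀ θ : Euc n, ‖θ‖ = r → v θ ∈ closure T := fun θ h =>
    closure_mono ((image_mono (ball_subset_ball hR)).trans subset_union_right) (hcl θ h)
  have hd : ∀ a b, b ∈ closure T → infDist a T ≤ dist a b := by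
    intro a b hb
    rw [← infDist_closure]
    exact infDist_le_dist_of_mem hb
  unfold glue
  split_ifs with h1 h2
  · exact (hd _ (u x) (subset_closure (Or.inl (mem_image_of_mem u hx)))).trans (by simpa using hS)
  · have hn : ‖(1 - δ)⁻¹ • x‖ ≤ r := by
      rw [norm_smul, Real.norm_of_nonneg (inv_nonneg.2 (by linarith)), ← div_eq_inv_mul,
        div_le_iff₀ (by linarith)]
      linarith
    refine (hd _ (v ((1 - δ)⁻¹ • x)) ?_).trans (by simpa using hS)
    rcases hn.lt_or_eq with h | h
    · exact subset_closure (Or.inr (mem_image_of_mem v (by rw [mem_ball_zero_iff]; linarith)))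
    · exact hcl' _ h
  · have hx0 : 0 < ‖x‖ := by
      rw [not_le] at h2
      have : 0 < (1 - δ) * r := mul_pos (by linarith) hr
      linarith
    have hn : ‖(r / ‖x‖) • x‖ = r := by
      rw [norm_smul, Real.norm_of_nonneg (by positivity)]; field_simp
    refine (hd _ _ (hcl' _ hn)).trans ?_
    set θ := (r / ‖x‖) • x
    rw [dist_eq_norm, show (1 - η ‖x‖) • u θ + η ‖x‖ • v θ - v θ = (1 - η ‖x‖) • (u θ - v θ) by module,
      norm_smul, Real.norm_of_nonneg (by linarith [(hI ‖x‖).2])]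
    exact (mul_le_of_le_one_left (norm_nonneg _) (by linarith [(hI ‖x‖).1])).trans (hSuv θ hn)

/-- a fractional Luckhaus-type gluing lemma. -/
theorem stmt5 (n : ℕ) (hn : 2 ≤ n) (s p : ℝ) (hs : 0 < s) (hs1 : s < 1) (hp : 1 < p) :
    ∃ C : ℝ, 0 < C ∧
      ∀ (M : ℕ), 1 ≤ M → ∀ (r δ : ℝ), 0 < r → 0 < δ → δ < 1 / 4 →
      ∀ u v : Euc n → Euc M, Measurable u → Measurable v →
        ContinuousOn u (Metric.sphere (0 : Euc n) r) →
        ContinuousOn v (Metric.sphere (0 : Euc n) r) →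
        (∫⁻ θ in Metric.sphere (0 : Euc n) r,
            (∫⁻ y in Metric.ball (0 : Euc n) (2 * r) \ Metric.ball (0 : Euc n) r,
              ENNReal.ofReal (‖u θ - u y‖ ^ p / ‖θ - y‖ ^ ((n : ℝ) + s * p)))
            ∂μH[(n : ℝ) - 1]) < ⊤ →
        (∫⁻ θ in Metric.sphere (0 : Euc n) r,
            (∫⁻ y in Metric.ball (0 : Euc n) r,
              ENNReal.ofReal (‖v θ - v y‖ ^ p / ‖θ - y‖ ^ ((n : ℝ) + s * p)))
            ∂μH[(n : ℝ) - 1]) < ⊤ →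
        (∫⁻ θ in Metric.sphere (0 : Euc n) r, ∫⁻ ω in Metric.sphere (0 : Euc n) r,
            ENNReal.ofReal (‖u θ - u ω‖ ^ p / ‖θ - ω‖ ^ ((n : ℝ) - 1 + s * p))
            ∂μH[(n : ℝ) - 1] ∂μH[(n : ℝ) - 1]) < ⊤ →
      ∀ η : ℝ → ℝ, ContDiff ℝ (⊤ : ℕ∞) η → (∀ x, η x ∈ Set.Icc (0 : ℝ) 1) →
        (∀ x : ℝ, 0 ≤ x → x ≤ (1 - 3 * δ / 4) * r → η x = 1) →
        (∀ x : ℝ, (1 - δ / 2) * r ≤ x → η x = 0) →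
        (∀ x : ℝ, |deriv η x| ≤ 100 / (δ * r)) →
        -- (i) the glued map stays close to the union of the images
        ((∀ R : ℝ, r ≤ R → ∀ x ∈ Metric.ball (0 : Euc n) R,
            Metric.infDist (glue n M r δ η u v x)
                (u '' Metric.ball (0 : Euc n) R ∪ v '' Metric.ball (0 : Euc n) R)
              ≤ sSup ((fun θ => ‖u θ - v θ‖) '' Metric.sphere (0 : Euc n) r))
        -- (ii) energy estimate for the glued map
        ∧ gagEnergy n M s p (Metric.ball (0 : Euc n) (2 * r)) (glue n M r δ η u v)
            ≤ gagEnergy n M s p (Metric.ball (0 : Euc n) (2 * r) \ Metric.ball (0 : Euc n) r) u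
              + ENNReal.ofReal C *
                (gagEnergy n M s p (Metric.ball (0 : Euc n) r) v
                  + ENNReal.ofReal (δ ^ (-(s * p)) * r) *
                      ((∫⁻ θ in Metric.sphere (0 : Euc n) r,
                          (∫⁻ y in Metric.ball (0 : Euc n) (2 * r) \ Metric.ball (0 : Euc n) r,
                            ENNReal.ofReal (‖u θ - u y‖ ^ p / ‖θ - y‖ ^ ((n : ℝ) + s * p)))
                          ∂μH[(n : ℝ) - 1])
                        + (∫⁻ θ in Metric.sphere (0 : Euc n) r,
                            (∫⁻ y in Metric.ball (0 : Euc n) r,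
                              ENNReal.ofReal (‖v θ - v y‖ ^ p / ‖θ - y‖ ^ ((n : ℝ) + s * p)))
                            ∂μH[(n : ℝ) - 1]))
                  + ENNReal.ofReal (δ * r) *
                      (∫⁻ θ in Metric.sphere (0 : Euc n) r, ∫⁻ ω in Metric.sphere (0 : Euc n) r,
                        ENNReal.ofReal (‖u θ - u ω‖ ^ p / ‖θ - ω‖ ^ ((n : ℝ) - 1 + s * p))
                        ∂μH[(n : ℝ) - 1] ∂μH[(n : ℝ) - 1])
                  + ENNReal.ofReal (δ ^ (-(max (p - 1) (s * p))) * r ^ ((n : ℝ) - s * p) *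
                      (sSup ((fun θ => ‖u θ - v θ‖) '' Metric.sphere (0 : Euc n) r)) ^ p))) := by
  obtain ⟨C0, hC0⟩ := unit_est hn hs hs1 hp
  obtain ⟨C1, hC1⟩ := q_scale hn s p
  obtain ⟨C2, hC2⟩ := qD_scale hn s p
  refine ⟨((C0 * (1 + C1 + C2) + 1 : ℝ≥0) : ℝ), by positivity, ?_⟩
  intro M _ r δ hr hδ hδ1 u v hu hv huc hvc hA hB hD η hη hI h1 h0 hd
  set S := sSup ((fun θ => ‖u θ - v θ‖) '' sphere (0 : Euc n) r) with hSdef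
  have hS : 0 ≤ S := by
    apply Real.sSup_nonneg
    rintro _ ⟨θ, _, rfl⟩
    exact norm_nonneg _
  have hSuv : ∀ θ : Euc n, ‖θ‖ = r → ‖u θ - v θ‖ ≤ S := by
    intro θ hθ
    apply le_csSup
    · exact ((isCompact_sphere (0 : Euc n) r).image_of_continuousOn (huc.sub hvc).norm).bddAbove
    · exact mem_image_of_mem _ (by simpa using hθ)
  have qa := hC1 M r hr u hu (ball 0 (2 * r) \ ball 0 r)
  have qb := hC1 M r hr v hv (ball 0 r)
  have qd := hC2 M r hr u hu
  rw [pre_diff hr] at qa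
  rw [pre_ball1 hr] at qb
  generalize hAe : (∫⁻ θ in Metric.sphere (0 : Euc n) r,
            (∫⁻ y in Metric.ball (0 : Euc n) (2 * r) \ Metric.ball (0 : Euc n) r,
              ENNReal.ofReal (‖u θ - u y‖ ^ p / ‖θ - y‖ ^ ((n : ℝ) + s * p)))
            ∂μH[(n : ℝ) - 1]) = A at *
  generalize hBe : (∫⁻ θ in Metric.sphere (0 : Euc n) r,
            (∫⁻ y in Metric.ball (0 : Euc n) r,
              ENNReal.ofReal (‖v θ - v y‖ ^ p / ‖θ - y‖ ^ ((n : ℝ) + s * p)))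
            ∂μH[(n : ℝ) - 1]) = B at *
  generalize hDe : (∫⁻ θ in Metric.sphere (0 : Euc n) r, ∫⁻ ω in Metric.sphere (0 : Euc n) r,
            ENNReal.ofReal (‖u θ - u ω‖ ^ p / ‖θ - ω‖ ^ ((n : ℝ) - 1 + s * p))
            ∂μH[(n : ℝ) - 1] ∂μH[(n : ℝ) - 1]) = D at *
  change _ * qA s p (fun x => u (r • x)) ≤ _ at qa
  change _ * qB s p (fun x => v (r • x)) ≤ _ at qb
  have hrho : ENNReal.ofReal (r ^ ((n : ℝ) - s * p)) ≠ 0 := by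
    rw [ENNReal.ofReal_ne_zero_iff]; positivity
  have hqB : qB s p (fun x => v (r • x)) < ⊤ := by
    rw [lt_top_iff_ne_top]
    intro h
    rw [h, ENNReal.mul_top hrho, top_le_iff] at qb
    exact ENNReal.mul_ne_top ENNReal.coe_ne_top (ENNReal.mul_ne_top ENNReal.ofReal_ne_top hB.ne) qb
  have hcl : ∀ θ : Euc n, ‖θ‖ = r → v θ ∈ closure (v '' ball 0 r) := by
    intro θ hθ
    have hmap : MapsTo (fun x : Euc n => r • x) (sphere 0 1) (sphere 0 r) := by
      intro x hx
      rw [mem_sphere_zero_iff_norm] at hx ⊢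
      rw [norm_smul, hx, Real.norm_of_nonneg hr.le, mul_one]
    have := trace_closure hn hs hp (v := fun x => v (r • x)) (by fun_prop)
      (hvc.comp (continuous_const_smul r).continuousOn hmap) hqB (θ₀ := r⁻¹ • θ)
      (by rw [norm_smul, Real.norm_of_nonneg (by positivity), hθ, inv_mul_cancel₀ hr.ne'])
    simp only [smul_inv_smul₀ hr.ne'] at this
    refine closure_mono ?_ this
    rintro _ ⟨y, hy, rfl⟩
    refine ⟨r • y, ?_, rfl⟩
    rw [← pre_ball1 hr] at hy
    exact hy
  refine ⟨fun R hR x hx => part_i hr hδ1 hI hS hSuv hcl hR hx hδ, ?_⟩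
  have G := mk_glued hr hδ hδ1 hu hv hη hI h1 h0 hd hS hSuv
  have E := hC0 M δ S _ _ _ _ G
  rw [gag_scale hr _ _ (glue_meas hη.continuous.measurable hu hv), gag_scale hr (ball 0 (2 * r) \ ball 0 r) u hu,
    gag_scale hr (ball 0 r) v hv, pre_diff hr, pre_ball hr, pre_ball1 hr]
  clear_value S
  set ρ := ENNReal.ofReal (r ^ ((n : ℝ) - s * p)) with hρ
  refine (mul_le_mul' le_rfl E).trans ?_
  rw [mul_add]
  refine add_le_add le_rfl ?_
  have hsp : 0 < s * p := by positivity
  have d1 : (1:ℝ) ≤ δ ^ (-(s * p)) := Real.one_le_rpow_of_pos_of_le_one_of_nonpos hδ (by linarith) (by linarith)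
  have d2 : δ ^ (-(s * p)) ≤ δ ^ (-(max (p - 1) (s * p))) :=
    Real.rpow_le_rpow_of_exponent_ge hδ (by linarith) (neg_le_neg (le_max_right _ _))
  have hS4 : ρ * qS s p δ S ≤ ENNReal.ofReal (δ ^ (-(max (p - 1) (s * p))) * r ^ ((n : ℝ) - s * p) * S ^ p) := by
    unfold qS
    rw [hρ, ← ENNReal.ofReal_mul (by positivity), ← ENNReal.ofReal_mul (by positivity)]
    apply ENNReal.ofReal_le_ofReal
    calc _ = δ ^ (-(s * p)) * r ^ ((n : ℝ) - s * p) * S ^ p := by ring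
      _ ≤ _ := by gcongr
  have hr1 : ENNReal.ofReal r ≤ ENNReal.ofReal (δ ^ (-(s * p)) * r) :=
    ENNReal.ofReal_le_ofReal (le_mul_of_one_le_left hr.le d1)
  rw [ENNReal.ofReal_coe_nnreal]
  rw [ENNReal.ofReal_mul hδ.le]
  push_cast
  generalize gagEnergy n M s p (ball 0 1) (fun x => v (r • x)) = W at *
  generalize qA s p (fun x => u (r • x)) = a at *
  generalize qB s p (fun x => v (r • x)) = b at *
  generalize qD s p (fun x => u (r • x)) = d at *
  generalize ENNReal.ofReal (δ ^ (-(max (p - 1) (s * p))) * r ^ ((n : ℝ) - s * p) * S ^ p) = T at *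
  generalize qS s p δ S = t at *
  generalize ENNReal.ofReal (δ ^ (-(s * p)) * r) = k at *
  clear_value ρ
  grw [hr1] at qa qb
  calc ρ * (C0 * (W + (a + b) + ENNReal.ofReal δ * d + t))
      = C0 * (ρ * W + (ρ * a + ρ * b) + ENNReal.ofReal δ * (ρ * d) + ρ * t) := by ring
    _ ≤ C0 * (ρ * W + (C1 * (k * A) + C1 * (k * B)) + ENNReal.ofReal δ * (C2 * (ENNReal.ofReal r * D)) + T) := by
        gcongr
    _ = C0 * (1 * (ρ * W) + C1 * (k * (A + B)) + C2 * (ENNReal.ofReal δ * ENNReal.ofReal r * D) + 1 * T) := by ring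
    _ ≤ C0 * ((1 + C1 + C2) * (ρ * W) + (1 + C1 + C2) * (k * (A + B)) +
          (1 + C1 + C2) * (ENNReal.ofReal δ * ENNReal.ofReal r * D) + (1 + C1 + C2) * T) := by
        have i1 : (1:ℝ≥0∞) ≤ 1 + C1 + C2 := by rw [add_assoc]; exact le_self_add
        have i2 : (C1:ℝ≥0∞) ≤ 1 + C1 + C2 := le_add_self.trans le_self_add
        have i3 : (C2:ℝ≥0∞) ≤ 1 + C1 + C2 := le_add_self
        refine mul_le_mul' le_rfl (add_le_add (add_le_add (add_le_add ?_ ?_) ?_) ?_) <;>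
          exact mul_le_mul' (by assumption) le_rfl
    _ = C0 * (1 + C1 + C2) * (ρ * W + k * (A + B) + ENNReal.ofReal δ * ENNReal.ofReal r * D + T) := by ring
    _ ≤ _ := mul_le_mul' le_self_add le_rfl
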